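/- arXiv:1102.4199 — 3 statements merged into one kernel-verified Lean document; each statement's English description precedes it below -/
import Mathlib

section
/- Let f : [0,1] → ℝ be a self-similar function of Cantor type with parameters κ, a, b. Then f(x) = 1 − f(1 − x) for every x ∈ [0,1]. -/
/-- A continuous function `f : [0,1] → ℝ` is a *self-similar function of Cantor type*
with parameters `κ`, `a`, `b` if `f 0 = 0`, `f 1 = 1`, `f` is constant on each interval
`(α_{2k-1}, α_{2k})` for `k ∈ {1, …, κ-1}` (where `α_{2k} = k(a+b)`, `α_{2k+1} = α_{2k} + a`),
and for each `k ∈ {0, …, κ-1}` the function `x ↦ κ·f(α_{2k} + a·x)` differs from `f`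
by an additive constant. -/
def CantorType (κ : ℕ) (a b : ℝ) (f : ℝ → ℝ) : Prop :=
  ContinuousOn f (Set.Icc 0 1) ∧ f 0 = 0 ∧ f 1 = 1 ∧
  (∀ k : ℕ, 1 ≤ k → k ≤ κ - 1 →
    ∃ c : ℝ, ∀ x ∈ Set.Ioo (((k : ℝ) - 1) * (a + b) + a) ((k : ℝ) * (a + b)), f x = c) ∧
  (∀ k : ℕ, k ≤ κ - 1 → ∃ c : ℝ, ∀ x ∈ Set.Icc (0 : ℝ) 1,
    (κ : ℝ) * f ((k : ℝ) * (a + b) + a * x) = f x + c)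

/-!
Evaluating the self-similarity relation at `0` and `1`, and crossing each gap by continuity, gives
`κ * f α_{2k} = k` for every `k`. Hence the defect `δ x = f x + f (1 - x) - 1` vanishes on the gaps,
and `κ * δ (α_{2k} + a * y) = δ y` on the blocks, since reflection exchanges the `k`-th block with
the `(κ - 1 - k)`-th. So every value of `δ`, multiplied by `κ > 1`, is again a value of `δ`; as `δ`
is bounded, it is zero.
-/

open Set

theorem eqOn_zero_of_forall_exists_mul_norm_le {α E : Type*} [NormedAddGroup E] {s : Set α}
    {g : α → E} {r : ℝ} (hr : 1 < r) (hbdd : BddAbove ((fun x => ‖g x‖) '' s))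
    (hgrow : ∀ x ∈ s, ∃ y ∈ s, r * ‖g x‖ ≤ ‖g y‖) : EqOn g 0 s := by
  intro x hx
  set M := sSup ((fun x => ‖g x‖) '' s)
  have norm_le : ∀ y ∈ s, ‖g y‖ ≤ M := fun y hy => le_csSup hbdd (mem_image_of_mem _ hy)
  have mul_norm_le : ∀ y ∈ s, r * ‖g y‖ ≤ M := fun y hy =>
    let ⟨z, hz, hyz⟩ := hgrow y hy
    hyz.trans (norm_le z hz)
  have hM : M ≤ M / r := by
    refine csSup_le (Set.Nonempty.image _ ⟨x, hx⟩) ?_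
    rintro _ ⟨y, hy, rfl⟩
    exact (le_div_iff₀' (by linarith)).2 (mul_norm_le y hy)
  have hM_nonpos : M ≤ 0 := by
    rw [le_div_iff₀ (by linarith)] at hM
    nlinarith
  exact norm_le_zero_iff.1 ((norm_le x hx).trans hM_nonpos)

theorem eqOn_Icc_of_continuousOn_of_eqOn_Ioo {X Y : Type*} [TopologicalSpace X] [LinearOrder X]
    [OrderTopology X] [DenselyOrdered X] [TopologicalSpace Y] [T2Space Y] {f g : X → Y} {u v : X}
    (huv : u < v) (hf : ContinuousOn f (Icc u v)) (hg : ContinuousOn g (Icc u v))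
    (h : EqOn f g (Ioo u v)) : EqOn f g (Icc u v) :=
  h.of_subset_closure hf hg Ioo_subset_Icc_self (closure_Ioo huv.ne).ge

/-- The failure at `x` of the graph of `f` to be symmetric about the point `(1/2, 1/2)`. -/
def reflectionDefect (f : ℝ → ℝ) (x : ℝ) : ℝ :=
  f x + f (1 - x) - 1

theorem continuousOn_reflectionDefect {f : ℝ → ℝ} (hf : ContinuousOn f (Icc 0 1)) :
    ContinuousOn (reflectionDefect f) (Icc 0 1) := by
  have hreflect : ContinuousOn (fun x => f (1 - x)) (Icc 0 1) :=
    hf.comp (by fun_prop) fun _ hx => Icc.mem_iff_one_sub_mem.1 hx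
  exact (hf.add hreflect).sub continuousOn_const

theorem gap_subset_Icc {κ k : ℕ} {a b : ℝ} (ha : 0 ≤ a) (hb : 0 ≤ b)
    (hab : (κ - 1) * (a + b) + a = 1) (hk : k + 1 < κ) :
    Icc (k * (a + b) + a) ((k + 1) * (a + b)) ⊆ Icc (0 : ℝ) 1 := by
  have hkκ : (k : ℝ) + 1 ≤ κ - 1 := by
    rw [le_sub_iff_add_le]
    exact_mod_cast hk
  refine Icc_subset_Icc (by positivity) ?_
  calc ((k : ℝ) + 1) * (a + b) ≤ (κ - 1) * (a + b) := by gcongr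
    _ ≤ 1 := by linarith

theorem exists_mem_block_or_mem_gap {κ : ℕ} {a b x : ℝ} (ha : 0 < a) (hb : 0 < b)
    (hab : (κ - 1) * (a + b) + a = 1) (hx : x ∈ Icc (0 : ℝ) 1) :
    (∃ k < κ, ∃ y ∈ Icc (0 : ℝ) 1, k * (a + b) + a * y = x) ∨
      ∃ k : ℕ, k + 1 < κ ∧ x ∈ Icc (k * (a + b) + a) ((k + 1) * (a + b)) := by
  have hp : 0 < a + b := add_pos ha hb
  set k := ⌊x / (a + b)⌋₊
  have hkx : k * (a + b) ≤ x := (le_div_iff₀ hp).1 (Nat.floor_le (div_nonneg hx.1 hp.le))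
  have hxk : x < (k + 1) * (a + b) := (div_lt_iff₀ hp).1 (Nat.lt_floor_add_one _)
  rcases le_or_gt x (k * (a + b) + a) with hblock | hgap
  · have hkκ : k < κ := by
      have : (k : ℝ) * (a + b) < κ * (a + b) := by linarith [hx.2]
      exact_mod_cast lt_of_mul_lt_mul_right this hp.le
    refine .inl ⟨k, hkκ, (x - k * (a + b)) / a, ⟨?_, ?_⟩, ?_⟩
    · exact div_nonneg (sub_nonneg.2 hkx) ha.le
    · exact (div_le_one ha).2 (by linarith)
    · rw [mul_div_cancel₀ _ ha.ne', add_sub_cancel]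
  · have hkκ : k + 1 < κ := by
      have : ((k : ℝ) + 1) * (a + b) < κ * (a + b) := by linarith [hx.2]
      exact_mod_cast lt_of_mul_lt_mul_right this hp.le
    exact .inr ⟨k, hkκ, hgap.le, hxk.le⟩

namespace CantorType

variable {κ k : ℕ} {a b x : ℝ} {f : ℝ → ℝ}

theorem continuousOn (hf : CantorType κ a b f) : ContinuousOn f (Icc 0 1) :=
  hf.1

theorem map_zero (hf : CantorType κ a b f) : f 0 = 0 :=
  hf.2.1

theorem map_one (hf : CantorType κ a b f) : f 1 = 1 :=
  hf.2.2.1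

theorem mul_apply_block_eq_add_mul_apply_left (hf : CantorType κ a b f) (hk : k < κ)
    (hx : x ∈ Icc (0 : ℝ) 1) :
    κ * f (k * (a + b) + a * x) = f x + κ * f (k * (a + b)) := by
  obtain ⟨c, hc⟩ := hf.2.2.2.2 k (Nat.le_sub_one_of_lt hk)
  have hc_eq : κ * f (k * (a + b)) = c := by
    simpa [hf.map_zero] using hc 0 (left_mem_Icc.2 zero_le_one)
  rw [hc x hx, hc_eq]

theorem exists_eqOn_gap_const (hf : CantorType κ a b f) (ha : 0 ≤ a) (hb : 0 < b)
    (hab : (κ - 1) * (a + b) + a = 1) (hk : k + 1 < κ) :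
    ∃ c, EqOn f (fun _ => c) (Icc (k * (a + b) + a) ((k + 1) * (a + b))) := by
  obtain ⟨c, hc⟩ := hf.2.2.2.1 (k + 1) (Nat.le_add_left 1 k) (Nat.le_sub_one_of_lt hk)
  rw [Nat.cast_add_one, add_sub_cancel_right] at hc
  exact ⟨c, eqOn_Icc_of_continuousOn_of_eqOn_Ioo (by linarith)
    (hf.continuousOn.mono (gap_subset_Icc ha hb.le hab hk)) continuousOn_const hc⟩

theorem mul_apply_gap_eq_one_add_mul_apply_left (hf : CantorType κ a b f) (ha : 0 ≤ a) (hb : 0 < b)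
    (hab : (κ - 1) * (a + b) + a = 1) (hk : k + 1 < κ)
    (hx : x ∈ Icc (k * (a + b) + a) ((k + 1) * (a + b))) :
    κ * f x = 1 + κ * f (k * (a + b)) := by
  obtain ⟨c, hc⟩ := hf.exists_eqOn_gap_const ha hb hab hk
  calc κ * f x = κ * f (k * (a + b) + a * 1) := by
        rw [mul_one, hc hx, hc (left_mem_Icc.2 (by linarith))]
    _ = 1 + κ * f (k * (a + b)) := by
        rw [hf.mul_apply_block_eq_add_mul_apply_left (Nat.lt_of_succ_lt hk)
          (right_mem_Icc.2 zero_le_one), hf.map_one]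

theorem mul_apply_left (hf : CantorType κ a b f) (ha : 0 ≤ a) (hb : 0 < b)
    (hab : (κ - 1) * (a + b) + a = 1) (hk : k < κ) : κ * f (k * (a + b)) = k := by
  induction k with
  | zero => simp [hf.map_zero]
  | succ k ih =>
    have hright : ((k : ℝ) + 1) * (a + b) ∈ Icc (k * (a + b) + a) ((k + 1) * (a + b)) :=
      right_mem_Icc.2 (by linarith)
    rw [Nat.cast_add_one, hf.mul_apply_gap_eq_one_add_mul_apply_left ha hb hab hk hright,
      ih (Nat.lt_of_succ_lt hk), add_comm]

theorem mul_apply_block (hf : CantorType κ a b f) (ha : 0 ≤ a) (hb : 0 < b)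
    (hab : (κ - 1) * (a + b) + a = 1) (hk : k < κ) (hx : x ∈ Icc (0 : ℝ) 1) :
    κ * f (k * (a + b) + a * x) = f x + k := by
  rw [hf.mul_apply_block_eq_add_mul_apply_left hk hx, hf.mul_apply_left ha hb hab hk]

theorem mul_apply_gap (hf : CantorType κ a b f) (ha : 0 ≤ a) (hb : 0 < b)
    (hab : (κ - 1) * (a + b) + a = 1) (hk : k + 1 < κ)
    (hx : x ∈ Icc (k * (a + b) + a) ((k + 1) * (a + b))) : κ * f x = k + 1 := by
  rw [hf.mul_apply_gap_eq_one_add_mul_apply_left ha hb hab hk hx,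
    hf.mul_apply_left ha hb hab (Nat.lt_of_succ_lt hk), add_comm]

theorem mul_reflectionDefect_block (hf : CantorType κ a b f) (ha : 0 ≤ a) (hb : 0 < b)
    (hab : (κ - 1) * (a + b) + a = 1) (hk : k < κ) (hx : x ∈ Icc (0 : ℝ) 1) :
    κ * reflectionDefect f (k * (a + b) + a * x) = reflectionDefect f x := by
  obtain ⟨m, rfl⟩ := Nat.exists_eq_add_of_lt hk
  have hreflect : 1 - (k * (a + b) + a * x) = m * (a + b) + a * (1 - x) := by
    push_cast at hab
    linear_combination -hab
  have hblock := hf.mul_apply_block ha hb hab hk hx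
  have hblock' := hf.mul_apply_block (k := m) ha hb hab (by lia) (Icc.mem_iff_one_sub_mem.1 hx)
  simp only [reflectionDefect, hreflect]
  push_cast at hblock hblock' ⊢
  linear_combination hblock + hblock'

theorem reflectionDefect_gap (hf : CantorType κ a b f) (ha : 0 ≤ a) (hb : 0 < b)
    (hab : (κ - 1) * (a + b) + a = 1) (hk : k + 1 < κ)
    (hx : x ∈ Icc (k * (a + b) + a) ((k + 1) * (a + b))) : reflectionDefect f x = 0 := by
  obtain ⟨m, rfl⟩ := Nat.exists_eq_add_of_lt hk
  have hreflect : 1 - x ∈ Icc (m * (a + b) + a) ((m + 1) * (a + b)) := by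
    push_cast at hab
    constructor <;> linarith [hx.1, hx.2]
  have hgap := hf.mul_apply_gap ha hb hab hk hx
  have hgap' := hf.mul_apply_gap ha hb hab (by lia) hreflect
  have hκ : ((k + 1 + m + 1 : ℕ) : ℝ) ≠ 0 := by positivity
  refine (mul_eq_zero_iff_left hκ).1 ?_
  simp only [reflectionDefect]
  push_cast at hgap hgap' ⊢
  linear_combination hgap + hgap'

theorem exists_reflectionDefect_eq_mul (hf : CantorType κ a b f) (ha : 0 < a) (hb : 0 < b)
    (hab : (κ - 1) * (a + b) + a = 1) (hx : x ∈ Icc (0 : ℝ) 1) :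
    ∃ y ∈ Icc (0 : ℝ) 1, reflectionDefect f y = κ * reflectionDefect f x := by
  rcases exists_mem_block_or_mem_gap ha hb hab hx with ⟨k, hk, y, hy, rfl⟩ | ⟨k, hk, hgap⟩
  · exact ⟨y, hy, (hf.mul_reflectionDefect_block ha.le hb hab hk hy).symm⟩
  · exact ⟨x, hx, by rw [hf.reflectionDefect_gap ha.le hb hab hk hgap, mul_zero]⟩

theorem eqOn_reflectionDefect_zero (hf : CantorType κ a b f) (hκ : 1 < κ) (ha : 0 < a) (hb : 0 < b)
    (hab : (κ - 1) * (a + b) + a = 1) : EqOn (reflectionDefect f) 0 (Icc 0 1) := by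
  refine eqOn_zero_of_forall_exists_mul_norm_le (r := κ) (mod_cast hκ)
    (isCompact_Icc.bddAbove_image (continuousOn_reflectionDefect hf.continuousOn).norm) ?_
  intro x hx
  obtain ⟨y, hy, hxy⟩ := hf.exists_reflectionDefect_eq_mul ha hb hab hx
  exact ⟨y, hy, by rw [hxy, norm_mul, Real.norm_natCast]⟩

end CantorType

theorem cantorType_reflection (κ : ℕ) (a b : ℝ) (hκ : 2 ≤ κ)
    (ha : 0 < a) (ha' : a < 1 / κ) (hb : b = (1 - κ * a) / (κ - 1))
    (f : ℝ → ℝ) (hf : CantorType κ a b f) :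
    ∀ x ∈ Set.Icc (0 : ℝ) 1, f x = 1 - f (1 - x) := by
  intro x hx
  have hκ' : (0 : ℝ) < κ - 1 := sub_pos.2 (mod_cast hκ)
  have hb_pos : 0 < b := by
    rw [hb]
    exact div_pos (sub_pos.2 ((lt_div_iff₀' (by linarith)).1 ha')) hκ'
  have hab : (κ - 1) * (a + b) + a = 1 := by
    rw [hb]
    field_simp
    ring
  have hdefect : f x + f (1 - x) - 1 = 0 := hf.eqOn_reflectionDefect_zero hκ ha hb_pos hab hx
  linarith
end

section
/- For every integer κ ≥ 2 and every real a ∈ (0, 1/κ), there exists exactly one continuous function f : [0,1] → ℝ that is a self-similar function of Cantor type with parameters κ, a, b (where b = (1 − κa)/(κ − 1)). -/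
/-!
Extend `f` by `0` to the left and by `1` to the right of `[0, 1]`. Self-similarity, constancy on the
gaps and the boundary values together say exactly that `f` is a fixed point of
`F ↦ κ⁻¹ * ∑ k < κ, F ((· - k * (a + b)) / a)`. At each point all summands except possibly one are
forced to be `0` or `1` by the boundary values, so on the continuous functions with these boundary
values this operator is a contraction with factor `κ⁻¹`, and Banach's theorem applies.
-/

namespace CantorType

open Set unitInterval Function

/-- The parameters describe a subdivision of `[0, 1]` into `κ` closed cells of length `a`, any two
consecutive ones separated by a gap of length `b`; the `k`-th cell, counted from `0`, starts at
`k * (a + b)`. -/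
structure IsSubdivision (κ : ℕ) (a b : ℝ) : Prop where
  cell_pos : 0 < a
  gap_nonneg : 0 ≤ b
  total_length : ((κ : ℝ) - 1) * (a + b) + a = 1

/-- The affine coordinate of `x` in the cell that starts at `k * (a + b)`, truncated to `[0, 1]`. -/
noncomputable def cellCoord (a b : ℝ) (k : ℕ) : C(ℝ, I) where
  toFun x := projIcc 0 1 zero_le_one ((x - k * (a + b)) / a)
  continuous_toFun := continuous_projIcc.comp (by fun_prop)

/-- The continuous functions on `[0, 1]` with the boundary values of a function of Cantor type. -/
def normalizedMaps : Set C(I, ℝ) :=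
  {F | F 0 = 0 ∧ F 1 = 1}

/-- The mean of the copies of `F` carried by the `κ` cells. Among the maps in `normalizedMaps`, its
fixed points are exactly the functions of Cantor type. -/
noncomputable def cellAverage (κ : ℕ) (a b : ℝ) (F : C(I, ℝ)) : C(I, ℝ) where
  toFun x := (κ : ℝ)⁻¹ * ∑ k ∈ Finset.range κ, F (cellCoord a b k x)

variable {κ k : ℕ} {a b x : ℝ} {F G : C(I, ℝ)} {f g : ℝ → ℝ}

theorem IsSubdivision.of_gap_eq (hκ : 2 ≤ κ) (ha : 0 < a) (ha' : a ≤ 1 / κ)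
    (hb : b = (1 - κ * a) / (κ - 1)) : IsSubdivision κ a b := by
  have hκ' : (2 : ℝ) ≤ κ := by exact_mod_cast hκ
  have hκ_sub : (0 : ℝ) < κ - 1 := by linarith
  have hκa : a * κ ≤ 1 := (le_div_iff₀ (by linarith)).mp ha'
  have hgap : ((κ : ℝ) - 1) * b = 1 - κ * a := by rw [hb, mul_div_cancel₀ _ hκ_sub.ne']
  exact ⟨ha, hb ▸ div_nonneg (by linarith) hκ_sub.le, by linear_combination hgap⟩

theorem IsSubdivision.pos (h : IsSubdivision κ a b) : 0 < κ := by
  refine Nat.pos_of_ne_zero ?_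
  rintro rfl
  have htotal := h.total_length
  push_cast at htotal
  linarith [h.gap_nonneg]

theorem IsSubdivision.cell_subset (h : IsSubdivision κ a b) (hk : k < κ) :
    Icc (k * (a + b)) (k * (a + b) + a) ⊆ Icc 0 1 := by
  have hk' : (k : ℝ) ≤ κ - 1 := by
    rw [le_sub_iff_add_le]
    exact_mod_cast hk
  have hperiod : 0 ≤ a + b := add_nonneg h.cell_pos.le h.gap_nonneg
  refine Icc_subset_Icc (by positivity) ?_
  linarith [mul_le_mul_of_nonneg_right hk' hperiod, h.total_length]

theorem IsSubdivision.gap_subset (h : IsSubdivision κ a b) (hk : k + 1 < κ) :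
    Icc (k * (a + b) + a) ((k + 1) * (a + b)) ⊆ Icc 0 1 := by
  have hlen (c : ℝ) : c ≤ c + a := le_add_of_nonneg_right h.cell_pos.le
  have hleft := h.cell_subset (k.lt_succ_self.trans hk) (right_mem_Icc.mpr (hlen _))
  have hright := h.cell_subset hk (left_mem_Icc.mpr (hlen _))
  push_cast at hright
  exact Icc_subset_Icc hleft.1 hright.2

theorem exists_lt_mem_Icc_mul {n : ℕ} {d : ℝ} (hn : n ≠ 0) (hx : x ∈ Icc 0 (n * d)) :
    ∃ k < n, x ∈ Icc (k * d) ((k + 1) * d) := by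
  induction n with
  | zero => contradiction
  | succ n ih =>
    rcases le_or_gt (n * d) x with hle | hlt
    · exact ⟨n, n.lt_succ_self, hle, by exact_mod_cast hx.2⟩
    · have hn0 : n ≠ 0 := by
        rintro rfl
        simp [hx.1.not_gt] at hlt
      obtain ⟨k, hk, hxk⟩ := ih hn0 ⟨hx.1, hlt.le⟩
      exact ⟨k, hk.trans n.lt_succ_self, hxk⟩

theorem IsSubdivision.exists_mem_Icc (h : IsSubdivision κ a b) (hx : x ∈ Icc 0 1) :
    ∃ k < κ, x ∈ Icc (k * (a + b)) ((k + 1) * (a + b)) :=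
  exists_lt_mem_Icc_mul h.pos.ne' ⟨hx.1, by linarith [hx.2, h.total_length, h.gap_nonneg]⟩

theorem cellCoord_eq_zero (ha : 0 < a) (hx : x ≤ k * (a + b)) : cellCoord a b k x = 0 :=
  projIcc_of_le_left zero_le_one (div_nonpos_of_nonpos_of_nonneg (sub_nonpos.mpr hx) ha.le)

theorem cellCoord_eq_one (ha : 0 < a) (hx : k * (a + b) + a ≤ x) : cellCoord a b k x = 1 :=
  projIcc_of_right_le zero_le_one ((one_le_div₀ ha).mpr (by linarith))

theorem cellCoord_add_mul (ha : a ≠ 0) (t : I) : cellCoord a b k (k * (a + b) + a * t) = t := by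
  change projIcc 0 1 zero_le_one ((k * (a + b) + a * t - k * (a + b)) / a) = t
  rw [add_sub_cancel_left, mul_div_cancel_left₀ _ ha, projIcc_val]

theorem exists_eq_add_mul_of_mem_Icc (ha : 0 < a) {c : ℝ} (hx : x ∈ Icc c (c + a)) :
    ∃ t : I, x = c + a * t :=
  ⟨⟨(x - c) / a, div_nonneg (by linarith [hx.1]) ha.le, (div_le_one ha).mpr (by linarith [hx.2])⟩,
    by rw [mul_div_cancel₀ _ ha.ne']; ring⟩

/-- The cells before the `k`-th contribute `1` each, those after it contribute `0`. -/
theorem sum_cellCoord (ha : 0 < a) (hb : 0 ≤ b) (hF : F ∈ normalizedMaps) (hk : k < κ)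
    (hx : x ∈ Icc (k * (a + b)) ((k + 1) * (a + b))) :
    ∑ j ∈ Finset.range κ, F (cellCoord a b j x) = F (cellCoord a b k x) + k := by
  have hmono {i j : ℕ} (hij : i < j) : ((i : ℝ) + 1) * (a + b) ≤ j * (a + b) := by
    gcongr
    exact_mod_cast hij
  have hbefore : ∀ j ∈ Finset.range k, F (cellCoord a b j x) = 1 := fun j hj ↦ by
    have := hmono (Finset.mem_range.mp hj)
    rw [cellCoord_eq_one ha (by linarith [hx.1]), hF.2]
  have hafter : ∀ j ∈ Finset.Ico (k + 1) κ, F (cellCoord a b j x) = 0 := fun j hj ↦ by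
    rw [cellCoord_eq_zero ha (hx.2.trans (hmono (Finset.mem_Ico.mp hj).1)), hF.1]
  rw [← Finset.sum_range_add_sum_Ico _ (Nat.succ_le_of_lt hk), Finset.sum_range_succ,
    Finset.sum_congr rfl hbefore, Finset.sum_eq_zero hafter]
  simp [add_comm]

theorem mul_cellAverage_apply (h : IsSubdivision κ a b) (hF : F ∈ normalizedMaps) (hk : k < κ)
    {x : I} (hx : (x : ℝ) ∈ Icc (k * (a + b)) ((k + 1) * (a + b))) :
    κ * cellAverage κ a b F x = F (cellCoord a b k x) + k := by
  have hκ : (κ : ℝ) ≠ 0 := by exact_mod_cast h.pos.ne'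
  rw [← sum_cellCoord h.cell_pos h.gap_nonneg hF hk hx]
  exact mul_inv_cancel_left₀ hκ _

theorem mapsTo_cellAverage (h : IsSubdivision κ a b) :
    MapsTo (cellAverage κ a b) normalizedMaps normalizedMaps := by
  intro F hF
  have hκ : (κ : ℝ) ≠ 0 := by exact_mod_cast h.pos.ne'
  constructor
  · have hcoord : ∀ k, cellCoord a b k 0 = 0 := fun k ↦ cellCoord_eq_zero h.cell_pos <|
      mul_nonneg k.cast_nonneg (add_nonneg h.cell_pos.le h.gap_nonneg)
    simp [cellAverage, hcoord, hF.1]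
  · have hcoord : ∀ k ∈ Finset.range κ, F (cellCoord a b k 1) = 1 := fun k hk ↦ by
      rw [cellCoord_eq_one h.cell_pos, hF.2]
      have hlen : k * (a + b) ≤ k * (a + b) + a := le_add_of_nonneg_right h.cell_pos.le
      exact (h.cell_subset (Finset.mem_range.mp hk) (right_mem_Icc.mpr hlen)).2
    simp [cellAverage, Finset.sum_congr rfl hcoord, hκ]

theorem dist_cellAverage_le (h : IsSubdivision κ a b) (hF : F ∈ normalizedMaps)
    (hG : G ∈ normalizedMaps) :
    dist (cellAverage κ a b F) (cellAverage κ a b G) ≤ (κ : ℝ)⁻¹ * dist F G := by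
  have hκ : (0 : ℝ) < κ := by exact_mod_cast h.pos
  refine (ContinuousMap.dist_le (by positivity)).mpr fun x ↦ ?_
  obtain ⟨k, hk, hxk⟩ := h.exists_mem_Icc x.2
  rw [← div_eq_inv_mul, le_div_iff₀' hκ]
  calc κ * dist (cellAverage κ a b F x) (cellAverage κ a b G x)
      = dist (κ * cellAverage κ a b F x) (κ * cellAverage κ a b G x) := by
        rw [Real.dist_eq, Real.dist_eq, ← mul_sub, abs_mul, Nat.abs_cast]
    _ = dist (F (cellCoord a b k x)) (G (cellCoord a b k x)) := by
        rw [mul_cellAverage_apply h hF hk hxk, mul_cellAverage_apply h hG hk hxk, dist_add_right]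
    _ ≤ dist F G := ContinuousMap.dist_apply_le_dist _

theorem contractingWith_cellAverage (hκ : 2 ≤ κ) (h : IsSubdivision κ a b) :
    ContractingWith (κ : NNReal)⁻¹ ((mapsTo_cellAverage h).restrict _ _ _) :=
  ⟨inv_lt_one_of_one_lt₀ (by exact_mod_cast hκ),
    LipschitzWith.of_dist_le_mul fun F G ↦ dist_cellAverage_le h F.2 G.2⟩

theorem isClosed_normalizedMaps : IsClosed normalizedMaps :=
  (isClosed_eq (continuous_eval_const 0) continuous_const).inter
    (isClosed_eq (continuous_eval_const 1) continuous_const)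

theorem exists_isFixedPt_cellAverage (hκ : 2 ≤ κ) (h : IsSubdivision κ a b) :
    ∃ F ∈ normalizedMaps, IsFixedPt (cellAverage κ a b) F := by
  have hid : (⟨Subtype.val, continuous_subtype_val⟩ : C(I, ℝ)) ∈ normalizedMaps := ⟨rfl, rfl⟩
  obtain ⟨F, hF, hfix, -⟩ := (contractingWith_cellAverage hκ h).exists_fixedPoint'
    isClosed_normalizedMaps.isComplete _ hid (edist_ne_top _ _)
  exact ⟨F, hF, hfix⟩

theorem eq_of_isFixedPt_cellAverage (hκ : 2 ≤ κ) (h : IsSubdivision κ a b)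
    (hF : F ∈ normalizedMaps) (hF_fix : IsFixedPt (cellAverage κ a b) F)
    (hG : G ∈ normalizedMaps) (hG_fix : IsFixedPt (cellAverage κ a b) G) : F = G :=
  congrArg Subtype.val <| (contractingWith_cellAverage hκ h).fixedPoint_unique'
    (x := ⟨F, hF⟩) (y := ⟨G, hG⟩) (Subtype.ext hF_fix) (Subtype.ext hG_fix)

theorem mul_IccExtend_of_isFixedPt (h : IsSubdivision κ a b) (hF : F ∈ normalizedMaps)
    (hfix : IsFixedPt (cellAverage κ a b) F) (hk : k < κ) (hx₀₁ : x ∈ Icc 0 1)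
    (hx : x ∈ Icc (k * (a + b)) ((k + 1) * (a + b))) :
    κ * IccExtend zero_le_one F x = F (cellCoord a b k x) + k := by
  rw [IccExtend_of_mem _ _ hx₀₁, ← mul_cellAverage_apply h hF hk (x := ⟨x, hx₀₁⟩) hx, hfix]

theorem of_isFixedPt_cellAverage (h : IsSubdivision κ a b) (hF : F ∈ normalizedMaps)
    (hfix : IsFixedPt (cellAverage κ a b) F) :
    CantorType κ a b (IccExtend zero_le_one F) := by
  have hκ : (κ : ℝ) ≠ 0 := by exact_mod_cast h.pos.ne'
  have ha := h.cell_pos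
  have hb := h.gap_nonneg
  refine ⟨F.continuous.Icc_extend'.continuousOn, (IccExtend_left _ _).trans hF.1,
    (IccExtend_right _ _).trans hF.2, fun k hk_pos hk ↦ ?_, fun k hk ↦ ⟨k, fun x hx ↦ ?_⟩⟩
  · obtain ⟨m, rfl⟩ := Nat.exists_eq_add_of_le' hk_pos
    have hm : m + 1 < κ := by have := h.pos; omega
    refine ⟨(1 + m) / κ, fun x hx ↦ (eq_div_iff hκ).mpr ?_⟩
    push_cast at hx
    rw [add_sub_cancel_right] at hx
    have hx_cell : x ∈ Icc (m * (a + b)) ((m + 1) * (a + b)) := ⟨by linarith [hx.1], hx.2.le⟩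
    have hx₀₁ : x ∈ Icc 0 1 := h.gap_subset hm ⟨hx.1.le, hx.2.le⟩
    rw [mul_comm, mul_IccExtend_of_isFixedPt h hF hfix (by omega) hx₀₁ hx_cell,
      cellCoord_eq_one ha hx.1.le, hF.2]
  · have hkκ : k < κ := by have := h.pos; omega
    have hax : a * x ∈ Icc 0 a :=
      ⟨mul_nonneg ha.le hx.1, mul_le_of_le_one_right ha.le hx.2⟩
    have hx_cell : k * (a + b) + a * x ∈ Icc (k * (a + b)) (k * (a + b) + a) :=
      ⟨by linarith [hax.1], by linarith [hax.2]⟩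
    rw [mul_IccExtend_of_isFixedPt h hF hfix hkκ (h.cell_subset hkκ hx_cell)
        ⟨hx_cell.1, by linarith [hx_cell.2]⟩,
      cellCoord_add_mul ha.ne' ⟨x, hx⟩, IccExtend_of_mem _ _ hx]

theorem mul_apply_add_mul (hf : CantorType κ a b f) (hk : k < κ) (hx : x ∈ Icc 0 1) :
    κ * f (k * (a + b) + a * x) = f x + κ * f (k * (a + b)) := by
  obtain ⟨-, f_zero, -, -, hself⟩ := hf
  obtain ⟨c, hc⟩ := hself k (Nat.le_sub_one_of_lt hk)
  have hc_zero : κ * f (k * (a + b)) = c := by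
    simpa [f_zero] using hc 0 (left_mem_Icc.mpr zero_le_one)
  rw [hc x hx, hc_zero]

theorem eqOn_gap (h : IsSubdivision κ a b) (hf : CantorType κ a b f) (hk : k + 1 < κ) :
    EqOn f (fun _ ↦ f ((k + 1) * (a + b))) (Icc (k * (a + b) + a) ((k + 1) * (a + b))) := by
  have hlen : k * (a + b) + a ≤ (k + 1) * (a + b) := by linarith [h.gap_nonneg]
  rcases hlen.eq_or_lt with heq | hlt
  · rw [heq, Icc_self, eqOn_singleton]
  · obtain ⟨hcont, -, -, hgap, -⟩ := hf
    obtain ⟨c, hc⟩ := hgap (k + 1) (by omega) (by omega)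
    push_cast at hc
    rw [add_sub_cancel_right] at hc
    have hc_closed : EqOn f (fun _ ↦ c) (Icc (k * (a + b) + a) ((k + 1) * (a + b))) :=
      EqOn.of_subset_closure hc (hcont.mono (h.gap_subset hk)) continuousOn_const
        Ioo_subset_Icc_self (closure_Ioo hlt.ne).ge
    exact fun x hx ↦ (hc_closed hx).trans (hc_closed (right_mem_Icc.mpr hlen)).symm

theorem mul_apply_cell_left (h : IsSubdivision κ a b) (hf : CantorType κ a b f) (hk : k < κ) :
    κ * f (k * (a + b)) = k := by
  induction k with
  | zero => simp [hf.2.1]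
  | succ k ih =>
    have hk' : k < κ := k.lt_succ_self.trans hk
    have hgap : f (k * (a + b) + a) = f ((k + 1) * (a + b)) :=
      hf.eqOn_gap h hk (left_mem_Icc.mpr (by linarith [h.gap_nonneg]))
    have hcell := hf.mul_apply_add_mul hk' (right_mem_Icc.mpr zero_le_one)
    rw [mul_one, hgap, ih hk', hf.2.2.1] at hcell
    push_cast
    rw [hcell, add_comm]

theorem mul_apply_eq_cellCoord_add (h : IsSubdivision κ a b) (hf : CantorType κ a b f) (hk : k < κ)
    (hx₁ : x ≤ 1) (hx : x ∈ Icc (k * (a + b)) ((k + 1) * (a + b))) :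
    κ * f x = f (cellCoord a b k x) + k := by
  rcases le_or_gt x (k * (a + b) + a) with hcell | hgap
  · obtain ⟨t, rfl⟩ := exists_eq_add_mul_of_mem_Icc h.cell_pos ⟨hx.1, hcell⟩
    rw [hf.mul_apply_add_mul hk t.2, hf.mul_apply_cell_left h hk, cellCoord_add_mul h.cell_pos.ne']
  · have hk_succ : k + 1 < κ := by
      refine lt_of_le_of_ne hk fun hlast ↦ hgap.not_ge ?_
      have htotal := h.total_length
      rw [← hlast] at htotal
      push_cast at htotal
      linarith
    have hright := hf.mul_apply_cell_left h hk_succ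
    push_cast at hright
    rw [hf.eqOn_gap h hk_succ ⟨hgap.le, hx.2⟩, hright, cellCoord_eq_one h.cell_pos hgap.le,
      Icc.coe_one, hf.2.2.1, add_comm]

/-- The restriction to `[0, 1]` of a function of Cantor type, as a bundled continuous map. -/
def toContinuousMap (hf : CantorType κ a b f) : C(I, ℝ) :=
  ⟨fun x ↦ f x, hf.1.domRestrict⟩

theorem toContinuousMap_mem_normalizedMaps (hf : CantorType κ a b f) :
    hf.toContinuousMap ∈ normalizedMaps :=
  ⟨hf.2.1, hf.2.2.1⟩

theorem isFixedPt_toContinuousMap (h : IsSubdivision κ a b) (hf : CantorType κ a b f) :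
    IsFixedPt (cellAverage κ a b) hf.toContinuousMap := by
  have hκ : (κ : ℝ) ≠ 0 := by exact_mod_cast h.pos.ne'
  ext x
  obtain ⟨k, hk, hxk⟩ := h.exists_mem_Icc x.2
  refine mul_left_cancel₀ hκ ?_
  rw [mul_cellAverage_apply h hf.toContinuousMap_mem_normalizedMaps hk hxk]
  exact (hf.mul_apply_eq_cellCoord_add h hk x.2.2 hxk).symm

theorem IsSubdivision.exists_cantorType (h : IsSubdivision κ a b) (hκ : 2 ≤ κ) :
    ∃ f : ℝ → ℝ, CantorType κ a b f :=
  let ⟨_, hF, hfix⟩ := exists_isFixedPt_cellAverage hκ h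
  ⟨_, of_isFixedPt_cellAverage h hF hfix⟩

theorem eqOn_Icc (hκ : 2 ≤ κ) (h : IsSubdivision κ a b) (hf : CantorType κ a b f)
    (hg : CantorType κ a b g) : EqOn f g (Icc 0 1) := by
  have heq : hf.toContinuousMap = hg.toContinuousMap := eq_of_isFixedPt_cellAverage hκ h
    hf.toContinuousMap_mem_normalizedMaps (hf.isFixedPt_toContinuousMap h)
    hg.toContinuousMap_mem_normalizedMaps (hg.isFixedPt_toContinuousMap h)
  exact fun x hx ↦ DFunLike.congr_fun heq ⟨x, hx⟩

end CantorType

theorem cantorType_exists_unique (κ : ℕ) (a b : ℝ) (hκ : 2 ≤ κ)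
    (ha : 0 < a) (ha' : a < 1 / κ) (hb : b = (1 - κ * a) / (κ - 1)) :
    (∃ f : ℝ → ℝ, CantorType κ a b f) ∧
      ∀ f g : ℝ → ℝ, CantorType κ a b f → CantorType κ a b g →
        Set.EqOn f g (Set.Icc 0 1) := by
  have h : CantorType.IsSubdivision κ a b := .of_gap_eq hκ ha ha'.le hb
  exact ⟨h.exists_cantorType hκ, fun _ _ hf hg ↦ hf.eqOn_Icc hκ h hg⟩
end

section
/- Let (λ_n)_{n∈ℕ} be a strictly increasing enumeration of all eigenvalues of the Neumann problem (γ₀ = γ₁ = 0) for the equation −y'' − λρy = 0 with weight ρ the distributional derivative of the Cantor-type self-similar function P with parameters κ, a, b, i.e., λ is strictly increasing and its range is exactly the set of all eigenvalues. Then for every n ∈ ℕ one has λ_{κn} = (κ/a)·λ_n. -/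
open MeasureTheory

/-- `lam` is an eigenvalue of the boundary value problem
`-y'' - λ ρ y = 0`, `y⁽¹⁾(0) - γ₀ y(0) = 0`, `y⁽¹⁾(1) + γ₁ y(1) = 0`, where `ρ` is the
distributional derivative of the function whose Lebesgue–Stieltjes measure is `μ`:
there are continuous `y, g : [0,1] → ℝ`, `y` not identically zero, with
`y(x) = y(0) + ∫₀ˣ g`, `g(x) = g(0) - λ ∫_{[0,x]} y dμ`, and
`g(0) - γ₀ y(0) = 0`, `g(1) + γ₁ y(1) = 0`. -/
def IsEigen (μ : Measure ℝ) (γ₀ γ₁ lam : ℝ) : Prop :=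
  ∃ y g : ℝ → ℝ, ContinuousOn y (Set.Icc 0 1) ∧ ContinuousOn g (Set.Icc 0 1) ∧
    (∃ x ∈ Set.Icc (0 : ℝ) 1, y x ≠ 0) ∧
    (∀ x ∈ Set.Icc (0 : ℝ) 1, y x = y 0 + ∫ t in (0 : ℝ)..x, g t) ∧
    (∀ x ∈ Set.Icc (0 : ℝ) 1, g x = g 0 - lam * ∫ t in Set.Icc (0 : ℝ) x, y t ∂μ) ∧
    g 0 - γ₀ * y 0 = 0 ∧ g 1 + γ₁ * y 1 = 0

/-!
The Neumann eigenvalues are the zeros of the lower-left entry `C l` of the transfer matrix `M l`,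
which carries the Cauchy data `(y, y')` of a solution of `-y'' = l μ y` from `0` to `1`. Restricted
to a cell and rescaled to `[0, 1]`, a solution with parameter `κ/a · l` becomes one with parameter
`l`, so the transfer over a cell and the gap following it is `N l = S * M l` with a fixed shear `S`.
Taking the `κ`-th power, Cayley–Hamilton gives `a · C (κ/a · l) = U_{κ-1} (Δ l) · C l` with
`Δ l = tr (N l) / 2` and `U` the Chebyshev polynomials of the second kind.

The Lagrange identity gives `M' = M J G`, where `J` is the symplectic form and `G` the Gram matrix
of the fundamental solutions in `L²(μ)`. Hence `Δ` is strictly monotone where `|Δ| < 1` and runs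
through `(-1, 1)` exactly once between two consecutive zeros of `C`, meeting each of the `κ - 1`
zeros of `U_{κ-1}` once. So `C` has exactly `κ - 1` zeros between `κ/a · λ_n` and
`κ/a · λ_{n+1}`, which are themselves zeros, and `λ_0 = 0`.
-/

namespace KreinString

open Set Filter Topology Polynomial Matrix
open scoped unitInterval

section Resolvent

variable {A : Type*} [NormedRing A] [NormedAlgebra ℝ A] [CompleteSpace A] {T : A} {m : ℝ}

theorem isUnit_one_add_smul_of_norm_pow_le (hT : ∀ n : ℕ, ‖T ^ n‖ ≤ m ^ n / n.factorial) (l : ℝ) :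
    IsUnit (1 + l • T) := by
  have neumann_series : Summable fun n : ℕ => (-(l • T)) ^ n := by
    refine .of_norm_bounded (Real.summable_pow_div_factorial (|l| * m)) fun n => ?_
    calc ‖(-(l • T)) ^ n‖ = |l| ^ n * ‖T ^ n‖ := by
          rw [← neg_smul, _root_.smul_pow, norm_smul, norm_pow, norm_neg, Real.norm_eq_abs]
      _ ≤ |l| ^ n * (m ^ n / n.factorial) := by gcongr; exact hT n
      _ = (|l| * m) ^ n / n.factorial := by ring
  rw [← sub_neg_eq_add]
  exact ⟨⟨_, _, neumann_series.one_sub_mul_tsum_pow, neumann_series.tsum_pow_mul_one_sub⟩, rfl⟩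

theorem continuous_inverse_one_add_smul_of_norm_pow_le
    (hT : ∀ n : ℕ, ‖T ^ n‖ ≤ m ^ n / n.factorial) :
    Continuous fun l : ℝ => Ring.inverse (1 + l • T) := by
  refine continuous_iff_continuousAt.2 fun l => ?_
  obtain ⟨u, hu⟩ := isUnit_one_add_smul_of_norm_pow_le hT l
  have hinv : ContinuousAt Ring.inverse (1 + l • T) := hu ▸ NormedRing.inverse_continuousAt u
  exact ContinuousAt.comp (f := fun l : ℝ => 1 + l • T) hinv (by fun_prop)

end Resolvent

section Chebyshev

theorem pow_eq_chebyshevU_smul_sub {R : Type*} [CommRing R] {N : Matrix (Fin 2) (Fin 2) R} {t : R}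
    (hdet : N.det = 1) (htr : N.trace = 2 * t) (n : ℕ) :
    N ^ n = (Chebyshev.U R (n - 1)).eval t • N - (Chebyshev.U R (n - 2)).eval t • 1 := by
  have cayley_hamilton : N * N = (2 * t) • N - 1 := by
    nontriviality R
    have hchar := N.aeval_self_charpoly
    rw [charpoly_fin_two, hdet] at hchar
    simp only [map_add, map_sub, map_mul, aeval_X, aeval_C, map_one, ← Algebra.smul_def,
      sq] at hchar
    rwa [htr, sub_add, sub_eq_zero] at hchar
  induction n with
  | zero => simp [Chebyshev.U_neg_two]
  | succ n ih =>
    have recurrence : (Chebyshev.U R n).eval t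
        = 2 * t * (Chebyshev.U R (n - 1)).eval t - (Chebyshev.U R (n - 2)).eval t := by
      simp [Chebyshev.U_eq R n]
    rw [pow_succ, ih, sub_mul, smul_mul_assoc, smul_mul_assoc, cayley_hamilton, one_mul]
    push_cast
    rw [add_sub_cancel_right, show (n : ℤ) + 1 - 2 = n - 1 by ring, recurrence]
    module

theorem setOf_eval_chebyshevU_eq_zero (n : ℕ) :
    {x : ℝ | (Chebyshev.U ℝ n).eval x = 0} =
      (fun k : ℕ => Real.cos ((k + 1) * Real.pi / (n + 1))) '' Finset.range n := by
  have hne : Chebyshev.U ℝ n ≠ 0 := by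
    rw [← degree_ne_bot, Chebyshev.degree_U_natCast]
    exact WithBot.natCast_ne_bot n
  ext x
  rw [mem_ofPred_eq, ← IsRoot.def, ← mem_roots hne, Chebyshev.roots_U_real]
  simp

theorem ncard_setOf_eval_chebyshevU_eq_zero (n : ℕ) :
    {x : ℝ | (Chebyshev.U ℝ n).eval x = 0}.ncard = n := by
  rw [setOf_eval_chebyshevU_eq_zero, InjOn.ncard_image, ncard_coe_finset, Finset.card_range]
  exact (Finset.range n).nodup_map_iff_injOn.mp (Chebyshev.roots_U_real_nodup n)

theorem setOf_eval_chebyshevU_eq_zero_subset (n : ℕ) :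
    {x : ℝ | (Chebyshev.U ℝ n).eval x = 0} ⊆ Ioo (-1) 1 := by
  rw [setOf_eval_chebyshevU_eq_zero]
  rintro _ ⟨k, hk, rfl⟩
  beta_reduce
  have hk' : (k : ℝ) < n := by exact_mod_cast Finset.mem_range.1 hk
  set θ := (k + 1) * Real.pi / (n + 1) with hθ
  have hpos : 0 < θ := by positivity
  have hlt : θ < Real.pi := by
    rw [hθ, div_lt_iff₀ (by positivity)]
    nlinarith [Real.pi_pos]
  have hsin := Real.sin_pos_of_pos_of_lt_pi hpos hlt
  have hcos : Real.cos θ ^ 2 < 1 := by nlinarith [Real.sin_sq_add_cos_sq θ]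
  exact abs_lt.1 ((sq_lt_one_iff_abs_lt_one _).1 hcos)

end Chebyshev

section Enumeration

variable {α : Type*} [LinearOrder α] {f : ℕ → α}

theorem ncard_range_inter_Ioo (hf : StrictMono f) (m n : ℕ) :
    (range f ∩ Ioo (f m) (f n)).ncard = n - m - 1 := by
  have himage : range f ∩ Ioo (f m) (f n) = f '' Ioo m n := by
    ext z
    constructor
    · rintro ⟨⟨i, rfl⟩, hi⟩
      exact ⟨i, ⟨hf.lt_iff_lt.1 hi.1, hf.lt_iff_lt.1 hi.2⟩, rfl⟩
    · rintro ⟨i, hi, rfl⟩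
      exact ⟨⟨i, rfl⟩, hf hi.1, hf hi.2⟩
  rw [himage, ncard_image_of_injective _ hf.injective, ← Finset.coe_Ioo, ncard_coe_finset,
    Nat.card_Ioo]

theorem strictMono_apply_mul_eq (hf : StrictMono f) {φ : α → α} (hφ : StrictMono φ)
    (hφ_zero : φ (f 0) = f 0) (hφ_range : MapsTo φ (range f) (range f)) {κ : ℕ} (hκ : 0 < κ)
    (hcount : ∀ n, (range f ∩ Ioo (φ (f n)) (φ (f (n + 1)))).ncard = κ - 1) (n : ℕ) :
    f (κ * n) = φ (f n) := by
  induction n with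
  | zero => rw [mul_zero, hφ_zero]
  | succ n ih =>
    obtain ⟨m, hm⟩ := hφ_range (mem_range_self (n + 1))
    have hlt : κ * n < m := by
      rw [← hf.lt_iff_lt, ih, hm]
      exact hφ (hf n.lt_succ_self)
    have hcount_n := hcount n
    rw [← ih, ← hm, ncard_range_inter_Ioo hf] at hcount_n
    rw [← hm, Nat.mul_succ]
    congr 1
    omega

end Enumeration

section Interlacing

variable {f f' C C' : ℝ → ℝ} {c l r : ℝ}

theorem deriv_nonneg_of_nonneg_right (hC : HasDerivAt C c l) (hl : C l = 0) (hlr : l < r)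
    (hpos : ∀ x ∈ Ioo l r, 0 ≤ C x) : 0 ≤ c := by
  have hslope := (hasDerivWithinAt_iff_tendsto_slope' self_notMem_Ioi).1
    (hC.hasDerivWithinAt (s := Ioi l))
  refine ge_of_tendsto hslope ?_
  filter_upwards [Ioo_mem_nhdsGT hlr] with x hx
  rw [slope_def_field, hl, sub_zero]
  exact div_nonneg (hpos x hx) (sub_nonneg.2 hx.1.le)

theorem deriv_nonpos_of_nonneg_left (hC : HasDerivAt C c r) (hr : C r = 0) (hlr : l < r)
    (hpos : ∀ x ∈ Ioo l r, 0 ≤ C x) : c ≤ 0 := by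
  have hslope := (hasDerivWithinAt_iff_tendsto_slope' self_notMem_Iio).1
    (hC.hasDerivWithinAt (s := Iio r))
  refine le_of_tendsto hslope ?_
  filter_upwards [Ioo_mem_nhdsLT hlr] with x hx
  rw [slope_def_field, hr, sub_zero]
  exact div_nonpos_of_nonneg_of_nonpos (hpos x hx) (sub_nonpos.2 hx.2.le)

theorem ne_of_lt_of_deriv_pos (hf : ∀ x, HasDerivAt f (f' x) x)
    (hderiv : ∀ x ∈ Icc l r, f x = c → 0 < f' x) (hlr : l < r) (hl : f l = c) : f r ≠ c := by
  intro hr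
  have hfence : ∀ ⦃x⦄, x ∈ Icc l r → c ≤ f x :=
    image_le_of_deriv_right_lt_deriv_boundary' (f' := 0) continuousOn_const
      (fun x _ => hasDerivWithinAt_const x _ c) hl.ge
      (HasDerivAt.continuousOn fun x _ => hf x) (fun x _ => (hf x).hasDerivWithinAt)
      (fun x hx h => hderiv x (Ico_subset_Icc_self hx) h.symm)
  have hnonpos := deriv_nonpos_of_nonneg_left ((hf r).sub_const c) (sub_eq_zero.2 hr) hlr
    fun x hx => sub_nonneg.2 (hfence (Ioo_subset_Icc_self hx))
  exact (hderiv r (right_mem_Icc.2 hlr.le) hr).not_ge hnonpos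

theorem bijOn_Ioo_of_pos (hf : ∀ x, HasDerivAt f (f' x) x) (hC : ∀ x, HasDerivAt C (C' x) x)
    (hmono : ∀ x, |f x| < 1 → 0 < C x * f' x)
    (hzero : ∀ x, C x = 0 → 1 ≤ |f x| ∧ f x * C' x < 0)
    (hlr : l < r) (hl : C l = 0) (hr : C r = 0) (hpos : ∀ x ∈ Ioo l r, 0 < C x) :
    BijOn f (Ioo l r ∩ f ⁻¹' Ioo (-1) 1) (Ioo (-1) 1) := by
  have hfl : f l ≤ -1 := by
    obtain ⟨habs, hneg⟩ := hzero l hl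
    have hC'l := deriv_nonneg_of_nonneg_right (hC l) hl hlr fun x hx => (hpos x hx).le
    exact (le_abs'.1 habs).resolve_right fun h => by nlinarith
  have hfr : 1 ≤ f r := by
    obtain ⟨habs, hneg⟩ := hzero r hr
    have hC'r := deriv_nonpos_of_nonneg_left (hC r) hr hlr fun x hx => (hpos x hx).le
    exact (le_abs'.1 habs).resolve_left fun h => by nlinarith
  refine ⟨fun x hx => hx.2, fun x hx y hy hxy => ?_, fun c hc => ?_⟩
  · have hinj : ∀ x ∈ Ioo l r, ∀ y ∈ Ioo l r, f x ∈ Ioo (-1) 1 → x < y → f y ≠ f x := by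
      intro x hx y hy hfx hlt
      refine ne_of_lt_of_deriv_pos hf (fun z hz hfz => ?_) hlt rfl
      have hz' : z ∈ Ioo l r := ⟨hx.1.trans_le hz.1, hz.2.trans_lt hy.2⟩
      exact pos_of_mul_pos_right (hmono z (abs_lt.2 (hfz ▸ hfx))) (hpos z hz').le
    rcases lt_trichotomy x y with hlt | heq | hgt
    · exact absurd hxy.symm (hinj x hx.1 y hy.1 hx.2 hlt)
    · exact heq
    · exact absurd hxy (hinj y hy.1 x hx.1 hy.2 hgt)
  · obtain ⟨x, hx, rfl⟩ := intermediate_value_Ioo hlr.le (HasDerivAt.continuousOn fun x _ => hf x)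
      ⟨hfl.trans_lt hc.1, hc.2.trans_le hfr⟩
    exact ⟨x, ⟨hx, hc⟩, rfl⟩

theorem bijOn_Ioo_of_consecutive_zeros (hf : ∀ x, HasDerivAt f (f' x) x)
    (hC : ∀ x, HasDerivAt C (C' x) x) (hmono : ∀ x, |f x| < 1 → 0 < C x * f' x)
    (hzero : ∀ x, C x = 0 → 1 ≤ |f x| ∧ f x * C' x < 0)
    (hlr : l < r) (hl : C l = 0) (hr : C r = 0) (hne : ∀ x ∈ Ioo l r, C x ≠ 0) :
    BijOn f (Ioo l r ∩ f ⁻¹' Ioo (-1) 1) (Ioo (-1) 1) := by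
  have hcont : ContinuousOn C (Ioo l r) := HasDerivAt.continuousOn fun x _ => hC x
  rcases isPreconnected_Ioo.mapsTo_Ioi_or_Iio hcont hne with hpos | hneg
  · exact bijOn_Ioo_of_pos hf hC hmono hzero hlr hl hr hpos
  · have hbij := bijOn_Ioo_of_pos (fun x => (hf x).neg) (fun x => (hC x).neg)
      (fun x hx => by simpa using hmono x (by simpa using hx))
      (fun x hx => by simpa using hzero x (by simpa using hx)) hlr (by simpa using hl)
      (by simpa using hr) (fun x hx => by simpa using hneg hx)
    have hneg_Ioo : Neg.neg '' Ioo (-1 : ℝ) 1 = Ioo (-1) 1 := by simp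
    have hcomp := ((Equiv.neg ℝ).image_eq_iff_bijOn.1 hneg_Ioo).comp hbij
    have hpre : (-f) ⁻¹' Ioo (-1) 1 = f ⁻¹' Ioo (-1) 1 := by
      ext x; simp [neg_lt, and_comm]
    rw [hpre] at hcomp
    exact hcomp.congr fun x _ => by simp

theorem ncard_zeros_Ioo_of_chebyshevU_mul {a T : ℝ} (ha : a ≠ 0) (hT : 0 < T) {n : ℕ}
    (hself : ∀ x, a * C (T * x) = (Chebyshev.U ℝ n).eval (f x) * C x)
    (hne : ∀ x ∈ Ioo l r, C x ≠ 0) (hbij : BijOn f (Ioo l r ∩ f ⁻¹' Ioo (-1) 1) (Ioo (-1) 1)) :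
    ({x | C x = 0} ∩ Ioo (T * l) (T * r)).ncard = n := by
  set Z := {x : ℝ | (Chebyshev.U ℝ n).eval x = 0}
  have hzeros : {x | C x = 0} ∩ Ioo (T * l) (T * r) = (T * ·) '' (Ioo l r ∩ f ⁻¹' Z) := by
    rw [← image_mul_left_Ioo hT, inter_comm, ← image_inter_preimage]
    congr 1
    ext x
    refine and_congr_right fun hx => ?_
    have hself_x := hself x
    constructor
    · intro (hCx : C (T * x) = 0)
      exact (mul_eq_zero.1 (by rw [← hself_x, hCx, mul_zero])).resolve_right (hne x hx)
    · intro (hUx : (Chebyshev.U ℝ n).eval (f x) = 0)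
      exact (mul_eq_zero.1 (by rw [hself_x, hUx, zero_mul])).resolve_left ha
  have hbijZ : BijOn f (Ioo l r ∩ f ⁻¹' Z) Z := by
    have hZ := setOf_eval_chebyshevU_eq_zero_subset n
    convert hbij.subset_right hZ using 1
    rw [inter_assoc, ← preimage_inter, inter_eq_right.2 hZ]
  rw [hzeros, ncard_image_of_injective _ (mul_right_injective₀ hT.ne'), hbijZ.ncard_eq,
    ncard_setOf_eval_chebyshevU_eq_zero]

end Interlacing

/-- The standard symplectic form on the plane of Cauchy data `(y, y')`. -/
def symplecticForm : Matrix (Fin 2) (Fin 2) ℝ :=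
  !![0, 1; -1, 0]

local notation "J" => symplecticForm

section SymplecticForm

variable {M N G : Matrix (Fin 2) (Fin 2) ℝ}

theorem transpose_mul_symplecticForm_mul_apply (i j : Fin 2) :
    (Mᵀ * J * N) i j = M 0 i * N 1 j - M 1 i * N 0 j := by
  simp only [symplecticForm, Matrix.mul_apply, transpose_apply, of_apply, cons_val',
    cons_val_fin_one, Fin.sum_univ_two, cons_val_zero, cons_val_one]
  ring

theorem sub_eq_smul_of_transpose_mul_symplecticForm_mul {c : ℝ} (hdet : M.det = 1)
    (hMN : Mᵀ * J * N = J + c • G) : N - M = -c • (M * J * G) := by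
  have hJJ : J * J = -1 := by
    ext i j; fin_cases i <;> fin_cases j <;> simp [symplecticForm]
  have hMJM : M * J * Mᵀ = J := by
    rw [det_fin_two] at hdet
    ext i j
    fin_cases i <;> fin_cases j <;>
      simp only [symplecticForm, Fin.mk_one, Fin.zero_eta, Matrix.mul_apply, of_apply, cons_val',
        cons_val_fin_one, Fin.sum_univ_two, cons_val_zero, cons_val_one, transpose_apply] <;>
      linarith
  have hN : -N = M * J * (Mᵀ * J * N) := by
    rw [← neg_one_mul N, ← hJJ]
    nth_rw 1 [← hMJM]
    simp only [Matrix.mul_assoc]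
  rw [← neg_neg N, hN, hMN, Matrix.mul_add, Matrix.mul_assoc M J J, hJJ, mul_smul_comm]
  simp

theorem lower_left_mul_trace_pos (hN : N.det = 1) (htr : |N.trace| < 2) (hG : G.PosSemidef)
    (hG0 : 0 < G 0 0) : 0 < N 1 0 * (N * J * G).trace := by
  have hquad := hG.dotProduct_mulVec_nonneg ![(N 0 0 - N 1 1) / 2, N 1 0]
  have hsymm : G 1 0 = G 0 1 := by simpa using hG.isHermitian.apply 0 1
  have hdisc : 0 < 1 - (N.trace / 2) ^ 2 := by
    rw [sub_pos, sq_lt_one_iff_abs_lt_one, abs_div, abs_two]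
    linarith
  simp only [det_fin_two, trace_fin_two] at hN hdisc
  simp only [dotProduct, mulVec, Fin.sum_univ_two, Pi.star_apply, star_trivial, cons_val_zero,
    cons_val_one, hsymm] at hquad
  have hsum : N 1 0 * (N * J * G).trace =
      ((N 0 0 - N 1 1) / 2 * (G 0 0 * ((N 0 0 - N 1 1) / 2) + G 0 1 * N 1 0) +
        N 1 0 * (G 0 1 * ((N 0 0 - N 1 1) / 2) + G 1 1 * N 1 0)) +
      (1 - ((N 0 0 + N 1 1) / 2) ^ 2) * G 0 0 := by
    simp only [trace_fin_two, symplecticForm, Matrix.mul_apply, of_apply, cons_val',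
      cons_val_fin_one, Fin.sum_univ_two, cons_val_zero, cons_val_one, hsymm]
    linear_combination G 0 0 * hN
  rw [hsum]
  exact add_pos_of_nonneg_of_pos hquad (mul_pos hdisc hG0)

theorem two_le_abs_trace_of_lower_left_eq_zero (hN : N.det = 1) (hzero : N 1 0 = 0) :
    2 ≤ |N.trace| := by
  rw [det_fin_two, hzero, mul_zero, sub_zero] at hN
  rw [trace_fin_two, ← abs_two, ← sq_le_sq]
  nlinarith [sq_nonneg (N 0 0 - N 1 1)]

theorem trace_mul_lower_left_neg (hN : N.det = 1) (hzero : N 1 0 = 0) (hG0 : 0 < G 0 0) :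
    N.trace * (N * J * G) 1 0 < 0 := by
  have hdet : N 0 0 * N 1 1 = 1 := by simpa [det_fin_two, hzero] using hN
  have hexpand : N.trace * (N * J * G) 1 0 = -(1 + N 1 1 ^ 2) * G 0 0 := by
    simp only [trace_fin_two, symplecticForm, Matrix.mul_apply, of_apply, cons_val',
      cons_val_fin_one, Fin.sum_univ_two, cons_val_zero, cons_val_one, hzero]
    linear_combination -G 0 0 * hdet
  rw [hexpand, neg_mul, neg_lt_zero]
  positivity

end SymplecticForm

section IteratedIntegral

variable {μ ν : Measure ℝ} [SFinite μ] [SFinite ν] {f g : ℝ → ℝ} {a b : ℝ}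

theorem setIntegral_prod_le_eq (hf : IntegrableOn f (Ioc a b) μ) (hg : IntegrableOn g (Ioc a b) ν)
    (hab : a ≤ b) :
    ∫ p in {p : ℝ × ℝ | p.2 ≤ p.1}, f p.1 * g p.2
        ∂(μ.restrict (Ioc a b)).prod (ν.restrict (Ioc a b)) =
      ∫ t in a..b, f t * ∫ s in a..t, g s ∂ν ∂μ := by
  have hS : MeasurableSet {p : ℝ × ℝ | p.2 ≤ p.1} := measurableSet_le measurable_snd measurable_fst
  rw [← integral_indicator hS, integral_prod _ ((hf.mul_prod hg).indicator hS),
    intervalIntegral.integral_of_le hab]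
  refine setIntegral_congr_fun measurableSet_Ioc fun t ht => ?_
  rw [intervalIntegral.integral_of_le ht.1.le, ← integral_const_mul,
    ← integral_indicator measurableSet_Ioc, ← integral_indicator measurableSet_Ioc]
  congr 1
  ext s
  have := ht.2
  simp only [indicator, mem_Ioc, mem_ofPred_eq]
  grind

theorem setIntegral_prod_lt_eq [NullSingletonClass μ] (hf : IntegrableOn f (Ioc a b) μ)
    (hg : IntegrableOn g (Ioc a b) ν) (hab : a ≤ b) :
    ∫ p in {p : ℝ × ℝ | p.1 < p.2}, f p.1 * g p.2
        ∂(μ.restrict (Ioc a b)).prod (ν.restrict (Ioc a b)) =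
      ∫ s in a..b, (∫ t in a..s, f t ∂μ) * g s ∂ν := by
  have hS : MeasurableSet {p : ℝ × ℝ | p.1 < p.2} := measurableSet_lt measurable_fst measurable_snd
  rw [← integral_indicator hS, integral_prod_symm _ ((hf.mul_prod hg).indicator hS),
    intervalIntegral.integral_of_le hab]
  refine setIntegral_congr_fun measurableSet_Ioc fun s hs => ?_
  rw [intervalIntegral.integral_of_le hs.1.le, integral_Ioc_eq_integral_Ioo (f := f),
    ← integral_mul_const, ← integral_indicator measurableSet_Ioo,
    ← integral_indicator measurableSet_Ioc]
  congr 1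
  ext t
  have := hs.2
  simp only [indicator, mem_Ioc, mem_Ioo, mem_ofPred_eq]
  grind

theorem integral_mul_integral_eq_add [NullSingletonClass μ] (hf : IntegrableOn f (Ioc a b) μ)
    (hg : IntegrableOn g (Ioc a b) ν) (hab : a ≤ b) :
    (∫ t in a..b, f t ∂μ) * ∫ s in a..b, g s ∂ν =
      (∫ t in a..b, f t * ∫ s in a..t, g s ∂ν ∂μ) +
        ∫ s in a..b, (∫ t in a..s, f t ∂μ) * g s ∂ν := by
  rw [← setIntegral_prod_le_eq hf hg hab, ← setIntegral_prod_lt_eq hf hg hab,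
    intervalIntegral.integral_of_le hab, intervalIntegral.integral_of_le hab, ← integral_prod_mul,
    ← integral_add_compl (measurableSet_le measurable_snd measurable_fst) (hf.mul_prod hg)]
  simp only [compl_ofPred, not_le]

end IteratedIntegral

section Primitive

variable (μ ν : Measure ℝ) [IsLocallyFiniteMeasure μ] [IsLocallyFiniteMeasure ν]

theorem intervalIntegrable_IccExtend (f : C(I, ℝ)) (p q : ℝ) :
    IntervalIntegrable (f.IccExtend zero_le_one) μ p q :=
  (f.IccExtend zero_le_one).continuous.intervalIntegrable p q

theorem abs_integral_IccExtend_le {f : C(I, ℝ)} {x : I} {c : ℝ} (hf : ∀ t ≤ x, |f t| ≤ c) :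
    |∫ t in (0 : ℝ)..x, f.IccExtend zero_le_one t ∂μ| ≤ c * μ.real (Ioc 0 1) := by
  have hc : 0 ≤ c := (abs_nonneg _).trans (hf x le_rfl)
  have hbound : ∀ t ∈ Ioc (0 : ℝ) x, ‖f.IccExtend zero_le_one t‖ ≤ c := fun t ht => by
    have htI : t ∈ I := ⟨ht.1.le, ht.2.trans x.2.2⟩
    simpa [IccExtend_of_mem _ _ htI] using hf ⟨t, htI⟩ ht.2
  rw [intervalIntegral.integral_of_le x.2.1]
  refine (norm_setIntegral_le_of_norm_le_const measure_Ioc_lt_top hbound).trans ?_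
  gcongr
  · exact measure_Ioc_lt_top.ne
  · exact x.2.2

variable [NullSingletonClass μ] [NullSingletonClass ν]

/-- The Stieltjes primitive `x ↦ ∫₀ˣ f dμ` as a bounded operator on `C([0, 1])`. A function on
`[0, 1]` is integrated through its constant extension to `ℝ`. -/
noncomputable def primitive : C(I, ℝ) →L[ℝ] C(I, ℝ) :=
  LinearMap.mkContinuous
    { toFun := fun f =>
        ⟨fun x => ∫ t in (0 : ℝ)..x, f.IccExtend zero_le_one t ∂μ,
          (intervalIntegral.continuous_primitive (intervalIntegrable_IccExtend μ f) 0).comp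
            continuous_subtype_val⟩
      map_add' := fun f g => ContinuousMap.ext fun _ => intervalIntegral.integral_add
        (intervalIntegrable_IccExtend μ f _ _) (intervalIntegrable_IccExtend μ g _ _)
      map_smul' := fun c f => ContinuousMap.ext fun _ => intervalIntegral.integral_smul c _ }
    (μ.real (Ioc 0 1))
    fun f => (ContinuousMap.norm_le _ (by positivity)).2 fun x => by
      rw [mul_comm]
      exact abs_integral_IccExtend_le μ fun t _ => f.norm_coe_le_norm t

theorem primitive_apply (f : C(I, ℝ)) (x : I) :
    primitive μ f x = ∫ t in (0 : ℝ)..x, f.IccExtend zero_le_one t ∂μ :=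
  rfl

@[simp]
theorem primitive_apply_zero (f : C(I, ℝ)) : primitive μ f 0 = 0 := by
  simp [primitive_apply]

theorem primitive_sub_primitive (f : C(I, ℝ)) (x y : I) :
    primitive μ f y - primitive μ f x = ∫ t in (x : ℝ)..y, f.IccExtend zero_le_one t ∂μ :=
  intervalIntegral.integral_interval_sub_left (intervalIntegrable_IccExtend μ f _ _)
    (intervalIntegrable_IccExtend μ f _ _)

theorem primitive_domRestrict {y : ℝ → ℝ} (hy : ContinuousOn y I) (x : I) :
    primitive μ ⟨unitInterval.domRestrict y, hy.domRestrict⟩ x = ∫ t in (0 : ℝ)..x, y t ∂μ := by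
  refine intervalIntegral.integral_congr fun t ht => ?_
  rw [uIcc_of_le x.2.1] at ht
  exact IccExtend_of_mem zero_le_one (unitInterval.domRestrict y) ⟨ht.1, ht.2.trans x.2.2⟩

theorem primitive_mul_primitive (f g : C(I, ℝ)) :
    primitive μ f * primitive ν g =
      primitive μ (f * primitive ν g) + primitive ν (primitive μ f * g) := by
  ext x
  have hIoc {ρ : Measure ℝ} [IsLocallyFiniteMeasure ρ] (h : C(I, ℝ)) :
      IntegrableOn (h.IccExtend zero_le_one) (Ioc (0 : ℝ) x) ρ :=
    (intervalIntegrable_IccExtend ρ h 0 x).1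
  refine (integral_mul_integral_eq_add (hIoc f) (hIoc g) x.2.1).trans (congrArg₂ _ ?_ ?_) <;>
  · refine intervalIntegral.integral_congr fun t ht => ?_
    rw [uIcc_of_le x.2.1] at ht
    have htI : t ∈ I := ⟨ht.1, ht.2.trans x.2.2⟩
    simp [IccExtend_of_mem _ _ htI, primitive_apply]

theorem primitive_apply_nonneg {f : C(I, ℝ)} (hf : 0 ≤ f) (x : I) : 0 ≤ primitive μ f x :=
  intervalIntegral.integral_nonneg_of_forall x.2.1 fun _ => hf _

theorem primitive_eq_zero_of_primitive_mul_self {f : C(I, ℝ)} (hf : primitive μ (f * f) 1 = 0) :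
    primitive μ f = 0 := by
  have hae : (f * f).IccExtend zero_le_one =ᵐ[μ.restrict (Ioc 0 1)] 0 := by
    rw [primitive_apply, Icc.coe_one, intervalIntegral.integral_of_le zero_le_one] at hf
    refine (integral_eq_zero_iff_of_nonneg ?_ (intervalIntegrable_IccExtend μ (f * f) 0 1).1).1 hf
    exact fun t => mul_self_nonneg _
  ext x
  rw [primitive_apply, intervalIntegral.integral_of_le x.2.1]
  refine integral_eq_zero_of_ae ?_
  filter_upwards [ae_restrict_of_ae_restrict_of_subset (Ioc_subset_Ioc_right x.2.2) hae] with t ht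
  exact mul_self_eq_zero.1 ht

end Primitive

section Volterra

variable (μ : Measure ℝ) [IsLocallyFiniteMeasure μ] [NullSingletonClass μ]

/-- The Volterra operator `f ↦ (x ↦ ∫₀ˣ ∫₀ᵗ f dμ dt)`, for which the equation `-y'' = l μ y` reads
`y + l • volterra μ y = y(0) + y'(0) x`. -/
noncomputable def volterra : C(I, ℝ) →L[ℝ] C(I, ℝ) :=
  primitive volume * primitive μ

theorem abs_volterra_apply_le {f : C(I, ℝ)} {c : ℝ} {n : ℕ} (hc : 0 ≤ c)
    (hf : ∀ x : I, |f x| ≤ c * (x : ℝ) ^ n / n.factorial) (x : I) :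
    |volterra μ f x| ≤ c * μ.real (Ioc 0 1) * (x : ℝ) ^ (n + 1) / (n + 1).factorial := by
  set m := μ.real (Ioc 0 1)
  have hinner : ∀ t : I, |primitive μ f t| ≤ c * m * (t : ℝ) ^ n / n.factorial := fun t => by
    have hmono : ∀ s ≤ t, |f s| ≤ c * (t : ℝ) ^ n / n.factorial := fun s hs =>
      (hf s).trans (by have := s.2.1; gcongr)
    exact (abs_integral_IccExtend_le μ hmono).trans_eq (by ring)
  calc |volterra μ f x| ≤ ∫ t in (0 : ℝ)..x, c * m * t ^ n / n.factorial := by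
        have hcont : Continuous fun t : ℝ => c * m * t ^ n / n.factorial := by fun_prop
        refine intervalIntegral.norm_integral_le_of_norm_le (μ := volume)
          (f := (primitive μ f).IccExtend zero_le_one) x.2.1 (.of_forall fun t ht => ?_)
          (hcont.intervalIntegrable _ _)
        have htI : t ∈ I := ⟨ht.1.le, ht.2.trans x.2.2⟩
        simpa [IccExtend_of_mem _ _ htI] using hinner ⟨t, htI⟩
    _ = c * m * (x : ℝ) ^ (n + 1) / (n + 1).factorial := by
        rw [intervalIntegral.integral_div, intervalIntegral.integral_const_mul, integral_pow,
          Nat.factorial_succ]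
        rw [zero_pow n.succ_ne_zero, sub_zero]
        push_cast
        field_simp

theorem norm_volterra_pow_le (n : ℕ) :
    ‖volterra μ ^ n‖ ≤ μ.real (Ioc 0 1) ^ n / n.factorial := by
  set m := μ.real (Ioc 0 1)
  have hpoint : ∀ (f : C(I, ℝ)) (x : I),
      |(volterra μ ^ n) f x| ≤ ‖f‖ * m ^ n * (x : ℝ) ^ n / n.factorial := by
    intro f
    induction n with
    | zero => simpa using f.norm_coe_le_norm
    | succ n ih =>
      intro x
      rw [pow_succ', mul_apply_eq_comp]
      exact (abs_volterra_apply_le μ (by positivity) ih x).trans_eq (by ring)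
  refine ContinuousLinearMap.opNorm_le_bound _ (by positivity) fun f =>
    (ContinuousMap.norm_le _ (by positivity)).2 fun x => (hpoint f x).trans ?_
  calc ‖f‖ * m ^ n * (x : ℝ) ^ n / n.factorial ≤ ‖f‖ * m ^ n * 1 / n.factorial := by
        gcongr
        exact pow_le_one₀ x.2.1 x.2.2
    _ = m ^ n / n.factorial * ‖f‖ := by ring

theorem isUnit_one_add_smul_volterra (l : ℝ) : IsUnit (1 + l • volterra μ) :=
  isUnit_one_add_smul_of_norm_pow_le (T := volterra μ) (norm_volterra_pow_le μ) l

theorem continuous_inverse_one_add_smul_volterra :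
    Continuous fun l : ℝ => Ring.inverse (1 + l • volterra μ) :=
  continuous_inverse_one_add_smul_of_norm_pow_le (T := volterra μ) (norm_volterra_pow_le μ)

end Volterra

section Solution

variable (μ : Measure ℝ) [IsLocallyFiniteMeasure μ] [NullSingletonClass μ]

/-- `y` solves the string equation `-y'' = l μ y` on `[0, 1]` and `g` is its derivative `y'`. -/
structure IsSolution (l : ℝ) (y g : C(I, ℝ)) : Prop where
  eq_add_primitive : y = y 0 • 1 + primitive volume g
  deriv_eq_sub_primitive : g = g 0 • 1 - l • primitive μ y

/-- The solutions of `-y'' = l μ y` with Cauchy data `(1, 0)` (index `0`) and `(0, 1)` (index `1`)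
at the origin. -/
noncomputable def fundamentalSolution (l : ℝ) (j : Fin 2) : C(I, ℝ) :=
  Ring.inverse (1 + l • volterra μ) (![1, primitive volume 1] j)

/-- The derivative of `fundamentalSolution`. -/
noncomputable def fundamentalDeriv (l : ℝ) (j : Fin 2) : C(I, ℝ) :=
  (![0, 1] j : ℝ) • 1 - l • primitive μ (fundamentalSolution μ l j)

theorem continuous_fundamentalSolution (j : Fin 2) :
    Continuous fun l => fundamentalSolution μ l j :=
  (continuous_inverse_one_add_smul_volterra μ).clm_apply continuous_const

theorem fundamentalSolution_add_smul_volterra (l : ℝ) (j : Fin 2) :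
    fundamentalSolution μ l j + l • volterra μ (fundamentalSolution μ l j) =
      ![1, primitive volume 1] j := by
  have hinv := Ring.mul_inverse_cancel _ (isUnit_one_add_smul_volterra μ l)
  simpa [fundamentalSolution] using DFunLike.congr_fun hinv (![1, primitive volume 1] j)

@[simp]
theorem fundamentalSolution_apply_zero (l : ℝ) (j : Fin 2) :
    fundamentalSolution μ l j 0 = ![1, 0] j := by
  have h := DFunLike.congr_fun (fundamentalSolution_add_smul_volterra μ l j) 0
  fin_cases j <;> simpa [volterra] using h

@[simp]
theorem fundamentalDeriv_apply_zero (l : ℝ) (j : Fin 2) :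
    fundamentalDeriv μ l j 0 = ![0, 1] j := by
  simp [fundamentalDeriv]

theorem isSolution_fundamentalSolution (l : ℝ) (j : Fin 2) :
    IsSolution μ l (fundamentalSolution μ l j) (fundamentalDeriv μ l j) where
  eq_add_primitive := by
    have h := fundamentalSolution_add_smul_volterra μ l j
    rw [fundamentalSolution_apply_zero, eq_sub_of_add_eq h]
    fin_cases j <;> simp [fundamentalDeriv, volterra, sub_eq_add_neg]
  deriv_eq_sub_primitive := by
    rw [fundamentalDeriv_apply_zero, fundamentalDeriv]

variable {μ} {l : ℝ} {y g : C(I, ℝ)}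

theorem IsSolution.apply_sub_apply (h : IsSolution μ l y g) (p q : I) :
    y q - y p = primitive volume g q - primitive volume g p := by
  have hp := DFunLike.congr_fun h.eq_add_primitive p
  have hq := DFunLike.congr_fun h.eq_add_primitive q
  simp only [ContinuousMap.add_apply, ContinuousMap.smul_apply, ContinuousMap.one_apply] at hp hq
  linear_combination hq - hp

theorem IsSolution.deriv_apply_sub_apply (h : IsSolution μ l y g) (p q : I) :
    g q - g p = -l * (primitive μ y q - primitive μ y p) := by
  have hp := DFunLike.congr_fun h.deriv_eq_sub_primitive p
  have hq := DFunLike.congr_fun h.deriv_eq_sub_primitive q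
  simp only [ContinuousMap.sub_apply, ContinuousMap.smul_apply, ContinuousMap.one_apply,
    smul_eq_mul] at hp hq
  linear_combination hq - hp

theorem IsSolution.eq_add_fundamentalSolution (hy : IsSolution μ l y g) :
    y = y 0 • fundamentalSolution μ l 0 + g 0 • fundamentalSolution μ l 1 := by
  have hvolterra : y + l • volterra μ y = y 0 • 1 + g 0 • primitive volume 1 := by
    have hprim : primitive volume g = g 0 • primitive volume 1 - l • volterra μ y := by
      rw [hy.deriv_eq_sub_primitive]
      simp [volterra]
    rw [← sub_eq_iff_eq_add'.2 hy.eq_add_primitive] at hprim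
    linear_combination hprim
  have hinv := Ring.inverse_mul_cancel _ (isUnit_one_add_smul_volterra μ l)
  calc y = Ring.inverse (1 + l • volterra μ) (y + l • volterra μ y) := by
        simpa using (DFunLike.congr_fun hinv y).symm
    _ = y 0 • fundamentalSolution μ l 0 + g 0 • fundamentalSolution μ l 1 := by
        simp [hvolterra, fundamentalSolution]

theorem IsSolution.deriv_eq_add_fundamentalDeriv (hy : IsSolution μ l y g) :
    g = y 0 • fundamentalDeriv μ l 0 + g 0 • fundamentalDeriv μ l 1 := by
  have hprim := congrArg (primitive μ) hy.eq_add_fundamentalSolution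
  rw [map_add, map_smul, map_smul] at hprim
  nth_rw 1 [hy.deriv_eq_sub_primitive]
  rw [hprim]
  simp only [fundamentalDeriv, cons_val_zero, cons_val_one]
  module

end Solution

section Lagrange

variable {μ ν : Measure ℝ} [IsLocallyFiniteMeasure μ] [IsLocallyFiniteMeasure ν]
  [NullSingletonClass μ] [NullSingletonClass ν] {l l' : ℝ} {y g z h : C(I, ℝ)}

theorem mul_eq_add_primitive {u v f k : C(I, ℝ)} (hu : u = u 0 • 1 + primitive μ f)
    (hv : v = v 0 • 1 + primitive ν k) :
    u * v = (u 0 * v 0) • 1 + primitive μ (f * v) + primitive ν (u * k) := by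
  have hfv : primitive μ (f * v) = v 0 • primitive μ f + primitive μ (f * primitive ν k) := by
    nth_rw 1 [hv]
    rw [mul_add, map_add, mul_smul_one, map_smul]
  have huk : primitive ν (u * k) = u 0 • primitive ν k + primitive ν (primitive μ f * k) := by
    nth_rw 1 [hu]
    rw [add_mul, map_add, smul_one_mul, map_smul]
  calc u * v = (u 0 • 1 + primitive μ f) * (v 0 • 1 + primitive ν k) := by rw [← hu, ← hv]
    _ = (u 0 * v 0) • 1 + v 0 • primitive μ f + u 0 • primitive ν k +
          primitive μ f * primitive ν k := by
        simp only [add_mul, mul_add, smul_one_mul, mul_smul_one]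
        module
    _ = _ := by
        rw [primitive_mul_primitive, hfv, huk]
        module

theorem IsSolution.mul_deriv_eq (hy : IsSolution μ l y g) (hz : IsSolution μ l' z h) :
    y * h = (y 0 * h 0) • 1 + primitive volume (g * h) - l' • primitive μ (y * z) := by
  have hh : h = h 0 • 1 + primitive μ (-l' • z) := by
    rw [map_smul, neg_smul, ← sub_eq_add_neg]
    exact hz.deriv_eq_sub_primitive
  rw [mul_eq_add_primitive hy.eq_add_primitive hh, mul_smul_comm, map_smul, neg_smul,
    ← sub_eq_add_neg]

theorem IsSolution.wronskian_eq (hy : IsSolution μ l y g) (hz : IsSolution μ l' z h) :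
    y * h - g * z = (y 0 * h 0 - g 0 * z 0) • 1 + (l - l') • primitive μ (y * z) := by
  rw [mul_comm g z, hy.mul_deriv_eq hz, hz.mul_deriv_eq hy, mul_comm h g, mul_comm z y]
  module

end Lagrange

section Transfer

variable (μ : Measure ℝ) [IsLocallyFiniteMeasure μ] [NullSingletonClass μ]

/-- The transfer matrix, mapping the Cauchy data `(y, y')` of a solution of `-y'' = l μ y` at `0` to
those at `1`. -/
noncomputable def transfer (l : ℝ) : Matrix (Fin 2) (Fin 2) ℝ :=
  of ![fun j => fundamentalSolution μ l j 1, fun j => fundamentalDeriv μ l j 1]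

/-- The Gram matrix in `L²(μ)` of the fundamental solutions for the spectral parameters `l`
and `l'`. -/
noncomputable def gram (l l' : ℝ) : Matrix (Fin 2) (Fin 2) ℝ :=
  of fun i j => primitive μ (fundamentalSolution μ l i * fundamentalSolution μ l' j) 1

theorem transfer_zero_apply (l : ℝ) (j : Fin 2) :
    transfer μ l 0 j = fundamentalSolution μ l j 1 :=
  rfl

theorem transfer_one_apply (l : ℝ) (j : Fin 2) :
    transfer μ l 1 j = fundamentalDeriv μ l j 1 :=
  rfl

variable {μ} in
theorem IsSolution.transfer_mulVec {l : ℝ} {y g : C(I, ℝ)} (hy : IsSolution μ l y g) :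
    transfer μ l *ᵥ ![y 0, g 0] = ![y 1, g 1] := by
  have hy1 := DFunLike.congr_fun hy.eq_add_fundamentalSolution 1
  have hg1 := DFunLike.congr_fun hy.deriv_eq_add_fundamentalDeriv 1
  ext i
  fin_cases i
  · simp [mulVec, dotProduct, Fin.sum_univ_two, transfer_zero_apply, hy1, mul_comm]
  · simp [mulVec, dotProduct, Fin.sum_univ_two, transfer_one_apply, hg1, mul_comm]

theorem transfer_transpose_mul_symplecticForm_mul (l l' : ℝ) :
    (transfer μ l)ᵀ * J * transfer μ l' = J + (l - l') • gram μ l l' := by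
  ext i j
  have hW := DFunLike.congr_fun ((isSolution_fundamentalSolution μ l i).wronskian_eq
    (isSolution_fundamentalSolution μ l' j)) 1
  have hJ : ![(1 : ℝ), 0] i * ![0, 1] j - ![0, 1] i * ![1, 0] j = J i j := by
    fin_cases i <;> fin_cases j <;> simp [symplecticForm]
  simpa [transpose_mul_symplecticForm_mul_apply, transfer_zero_apply, transfer_one_apply, hJ, gram]
    using hW

theorem det_transfer (l : ℝ) : (transfer μ l).det = 1 := by
  have hJ := congrFun₂ (transfer_transpose_mul_symplecticForm_mul μ l l) 0 1
  rw [transpose_mul_symplecticForm_mul_apply] at hJ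
  rw [det_fin_two, mul_comm (transfer μ l 0 1), hJ]
  simp [symplecticForm]

theorem transfer_sub_transfer (l l' : ℝ) :
    transfer μ l' - transfer μ l = (l' - l) • (transfer μ l * J * gram μ l l') := by
  rw [sub_eq_smul_of_transpose_mul_symplecticForm_mul (det_transfer μ l)
    (transfer_transpose_mul_symplecticForm_mul μ l l'), neg_sub]

theorem continuous_gram (l : ℝ) : Continuous (gram μ l) := by
  refine continuous_matrix fun i j => ?_
  have hprim : Continuous fun l' =>
      primitive μ (fundamentalSolution μ l i * fundamentalSolution μ l' j) :=
    (primitive μ).continuous.comp (continuous_const.mul (continuous_fundamentalSolution μ j))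
  exact (continuous_eval_const (1 : I)).comp hprim

theorem hasDerivAt_mul_transfer_apply (K : Matrix (Fin 2) (Fin 2) ℝ) (l : ℝ) (i j : Fin 2) :
    HasDerivAt (fun l => (K * transfer μ l) i j) ((K * transfer μ l * J * gram μ l l) i j) l := by
  rw [hasDerivAt_iff_tendsto_slope]
  have hcont : Continuous fun l' => (K * transfer μ l * J * gram μ l l') i j :=
    (continuous_const.matrix_mul (continuous_gram μ l)).matrix_elem i j
  refine (hcont.tendsto l |>.mono_left nhdsWithin_le_nhds).congr' ?_
  filter_upwards [self_mem_nhdsWithin] with l' hl'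
  have hsub : K * transfer μ l' - K * transfer μ l =
      (l' - l) • (K * transfer μ l * J * gram μ l l') := by
    rw [← Matrix.mul_sub, transfer_sub_transfer, mul_smul_comm]
    simp only [Matrix.mul_assoc]
  rw [slope_def_field, ← Matrix.sub_apply, hsub, Matrix.smul_apply, smul_eq_mul,
    mul_div_cancel_left₀ _ (sub_ne_zero.2 hl')]

theorem gram_posSemidef (l : ℝ) : (gram μ l l).PosSemidef := by
  refine .of_dotProduct_mulVec_nonneg ?_ fun v => ?_
  · ext i j
    simp [gram, mul_comm]
  · have hsq : v ⬝ᵥ gram μ l l *ᵥ v = primitive μ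
        ((v 0 • fundamentalSolution μ l 0 + v 1 • fundamentalSolution μ l 1) *
          (v 0 • fundamentalSolution μ l 0 + v 1 • fundamentalSolution μ l 1)) 1 := by
      simp only [dotProduct, mulVec, gram, of_apply, Fin.sum_univ_two, mul_add, mul_smul_comm,
        add_mul, smul_mul_assoc, smul_add, map_add, map_smul, ContinuousMap.add_apply,
        ContinuousMap.smul_apply, smul_eq_mul]
      ring
    rw [star_trivial, hsq]
    exact primitive_apply_nonneg μ (fun x => mul_self_nonneg _) 1

variable {μ} in
theorem gram_zero_zero_pos (hμ : μ (Ioc 0 1) ≠ 0) (l : ℝ) : 0 < gram μ l l 0 0 := by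
  refine lt_of_le_of_ne (primitive_apply_nonneg μ (fun x => mul_self_nonneg _) 1) fun hzero => hμ ?_
  have hprim := primitive_eq_zero_of_primitive_mul_self μ hzero.symm
  have hderiv : fundamentalDeriv μ l 0 = 0 := by simp [fundamentalDeriv, hprim]
  have hone : fundamentalSolution μ l 0 = 1 := by
    rw [(isSolution_fundamentalSolution μ l 0).eq_add_primitive, hderiv]
    simp
  have hμ_one : primitive μ 1 1 = 0 := by rw [← hone, hprim]; rfl
  have hreal : μ.real (Ioc 0 1) = 0 := by
    simpa [primitive_apply, IccExtend, intervalIntegral.integral_of_le] using hμ_one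
  exact (measureReal_eq_zero_iff measure_Ioc_lt_top.ne).1 hreal

variable {μ} in
theorem nonneg_of_transfer_one_zero_eq_zero (hμ : μ (Ioc 0 1) ≠ 0) {l : ℝ}
    (hl : transfer μ l 1 0 = 0) : 0 ≤ l := by
  have hsol := isSolution_fundamentalSolution μ l 0
  have henergy : 0 = primitive volume (fundamentalDeriv μ l 0 * fundamentalDeriv μ l 0) 1 -
      l * gram μ l l 0 0 := by
    have h := DFunLike.congr_fun (hsol.mul_deriv_eq hsol) 1
    simpa [← transfer_one_apply, hl, gram] using h
  refine nonneg_of_mul_nonneg_left ?_ (gram_zero_zero_pos hμ l)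
  rw [← sub_eq_zero.1 henergy.symm]
  exact primitive_apply_nonneg volume (fun x => mul_self_nonneg _) 1

theorem transfer_zero_one_zero : transfer μ 0 1 0 = 0 := by
  simp [transfer_one_apply, fundamentalDeriv]

end Transfer

section Eigenvalue

variable {μ : Measure ℝ} [IsLocallyFiniteMeasure μ] [NullSingletonClass μ] {l : ℝ}

theorem isEigen_iff_exists_isSolution :
    IsEigen μ 0 0 l ↔ ∃ y g : C(I, ℝ), y ≠ 0 ∧ IsSolution μ l y g ∧ g 0 = 0 ∧ g 1 = 0 := by
  constructor
  · rintro ⟨y, g, hy, hg, ⟨x, hxI, hx⟩, hy_eq, hg_eq, hg0, hg1⟩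
    refine ⟨⟨unitInterval.domRestrict y, hy.domRestrict⟩,
      ⟨unitInterval.domRestrict g, hg.domRestrict⟩, fun h => hx (DFunLike.congr_fun h ⟨x, hxI⟩),
      ⟨?_, ?_⟩, by simpa using hg0, by simpa using hg1⟩
    · ext t
      simpa [primitive_domRestrict volume hg] using hy_eq t t.2
    · ext t
      simpa [primitive_domRestrict μ hy, integral_Icc_eq_integral_Ioc,
        ← intervalIntegral.integral_of_le t.2.1] using hg_eq t t.2
  · rintro ⟨y, g, hy, hsol, hg0, hg1⟩
    have hext (f : C(I, ℝ)) (t : I) : f.IccExtend zero_le_one t = f t :=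
      IccExtend_val zero_le_one f t
    obtain ⟨x, hx⟩ := DFunLike.ne_iff.1 hy
    have hext0 (f : C(I, ℝ)) : f.IccExtend zero_le_one 0 = f 0 := hext f 0
    have hext1 (f : C(I, ℝ)) : f.IccExtend zero_le_one 1 = f 1 := hext f 1
    refine ⟨y.IccExtend zero_le_one, g.IccExtend zero_le_one, (map_continuous _).continuousOn,
      (map_continuous _).continuousOn, ⟨x, x.2, by rwa [hext]⟩, fun t ht => ?_, fun t ht => ?_,
      by rw [hext0, hg0, zero_mul, sub_zero], by rw [hext1, hg1, zero_mul, add_zero]⟩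
    · lift t to I using ht
      simpa [hext, hext0, primitive_apply] using DFunLike.congr_fun hsol.eq_add_primitive t
    · lift t to I using ht
      rw [integral_Icc_eq_integral_Ioc, ← intervalIntegral.integral_of_le t.2.1]
      simpa [hext, hext0, primitive_apply] using DFunLike.congr_fun hsol.deriv_eq_sub_primitive t

theorem isEigen_iff_transfer : IsEigen μ 0 0 l ↔ transfer μ l 1 0 = 0 := by
  rw [isEigen_iff_exists_isSolution]
  constructor
  · rintro ⟨y, g, hy, hsol, hg0, hg1⟩
    have hy0 : y 0 ≠ 0 := fun hy0 => hy (by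
      rw [hsol.eq_add_fundamentalSolution, hy0, hg0, zero_smul, zero_smul, add_zero])
    have hg1' := congrFun hsol.transfer_mulVec 1
    rw [hg0, hg1] at hg1'
    exact (mul_eq_zero.1 (by simpa [mulVec, dotProduct] using hg1')).resolve_right hy0
  · intro hl
    refine ⟨_, _, fun h => ?_, isSolution_fundamentalSolution μ l 0, by simp, hl⟩
    simpa using DFunLike.congr_fun h 0

end Eigenvalue

section Discriminant

variable {μ : Measure ℝ} [IsLocallyFiniteMeasure μ] [NullSingletonClass μ]

/-- Propagation of Cauchy data across an interval of length `β` that carries no mass. -/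
def shear (β : ℝ) : Matrix (Fin 2) (Fin 2) ℝ :=
  !![1, β; 0, 1]

theorem det_shear_mul_transfer (β l : ℝ) : (shear β * transfer μ l).det = 1 := by
  rw [det_mul, det_transfer, mul_one, shear, det_fin_two_of]
  norm_num

theorem shear_mul_one_apply (β : ℝ) (M : Matrix (Fin 2) (Fin 2) ℝ) (j : Fin 2) :
    (shear β * M) 1 j = M 1 j := by
  simp [shear, Matrix.mul_apply, Fin.sum_univ_two]

theorem shear_mulVec_one_apply (β : ℝ) (v : Fin 2 → ℝ) : (shear β *ᵥ v) 1 = v 1 := by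
  simp [shear, mulVec, dotProduct, Fin.sum_univ_two]

theorem bijOn_discriminant_of_consecutive_zeros (hμ : μ (Ioc 0 1) ≠ 0) (β : ℝ) {l r : ℝ}
    (hlr : l < r) (hl : transfer μ l 1 0 = 0) (hr : transfer μ r 1 0 = 0)
    (hne : ∀ x ∈ Ioo l r, transfer μ x 1 0 ≠ 0) :
    BijOn (fun x => (shear β * transfer μ x).trace / 2)
      (Ioo l r ∩ (fun x => (shear β * transfer μ x).trace / 2) ⁻¹' Ioo (-1) 1) (Ioo (-1) 1) := by
  set N := fun x => shear β * transfer μ x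
  have hdet (x) : (N x).det = 1 := det_shear_mul_transfer β x
  have hlower (x) : transfer μ x 1 0 = N x 1 0 := (shear_mul_one_apply β _ 0).symm
  have hderiv := hasDerivAt_mul_transfer_apply μ (shear β)
  have hG := gram_zero_zero_pos hμ
  simp only [hlower] at hl hr hne
  refine bijOn_Ioo_of_consecutive_zeros (C := fun x => N x 1 0)
    (f' := fun x => (N x * J * gram μ x x).trace / 2) (fun x => ?_) (fun x => hderiv x 1 0)
    (fun x hx => ?_) (fun x hx => ⟨?_, ?_⟩) hlr hl hr hne
  · simp only [trace_fin_two]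
    exact ((hderiv x 0 0).fun_add (hderiv x 1 1)).div_const 2
  · have htrace : |(N x).trace| < 2 := by
      rw [abs_div, abs_two] at hx
      linarith
    have := lower_left_mul_trace_pos (hdet x) htrace (gram_posSemidef μ x) (hG x)
    linarith
  · have := two_le_abs_trace_of_lower_left_eq_zero (hdet x) hx
    rw [abs_div, abs_two]
    linarith
  · have := trace_mul_lower_left_neg (hdet x) hx (hG x)
    linarith

end Discriminant

section SelfSimilarity

theorem map_affine_restrict_Ioc {μ : Measure ℝ} [IsLocallyFiniteMeasure μ] {α a : ℝ} {c : NNReal}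
    (ha : 0 < a) (hμ : ∀ x ∈ I, μ (Ioc 0 x) = c * μ (Ioc α (α + a * x))) :
    (μ.restrict (Ioc 0 1)).map (fun x => α + a * x) = c • μ.restrict (Ioc α (α + a)) := by
  have hmeas : Measurable fun x => α + a * x := by fun_prop
  have : IsFiniteMeasure (μ.restrict (Ioc 0 1)) :=
    isFiniteMeasure_restrict.2 measure_Ioc_lt_top.ne
  refine Measure.ext_of_Iic _ _ fun z => ?_
  obtain ⟨u, rfl⟩ : ∃ u, α + a * u = z := ⟨(z - α) / a, by field_simp; ring⟩
  have hpre : (fun x => α + a * x) ⁻¹' Iic (α + a * u) = Iic u := by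
    ext x
    simp [ha]
  have hmin : (α + a) ⊓ (α + a * u) = α + a * (1 ⊓ u) := by
    rw [mul_min_of_nonneg _ _ ha.le, mul_one, min_add_add_left]
  rw [Measure.map_apply hmeas measurableSet_Iic, hpre, Measure.smul_apply,
    Measure.restrict_apply measurableSet_Iic, Measure.restrict_apply measurableSet_Iic, inter_comm,
    Ioc_inter_Iic, inter_comm, Ioc_inter_Iic, hmin]
  rcases le_total 0 (1 ⊓ u) with hu | hu
  · exact hμ _ ⟨hu, inf_le_left⟩
  · have hau : α + a * (1 ⊓ u) ≤ α := by
      simpa using mul_nonpos_of_nonneg_of_nonpos ha.le hu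
    rw [Ioc_eq_empty hu.not_gt, Ioc_eq_empty hau.not_gt, measure_empty, smul_zero]

/-- The map `x ↦ α + a x` of `[0, 1]` to itself; its values are projected to `[0, 1]`, which is
vacuous when `0 ≤ α`, `0 ≤ a` and `α + a ≤ 1`. -/
noncomputable def affine (α a : ℝ) : C(I, I) :=
  ⟨fun x => projIcc 0 1 zero_le_one (α + a * x), by fun_prop⟩

variable {α a : ℝ} (hα : 0 ≤ α) (ha : 0 < a) (hαa : α + a ≤ 1)
include hα ha hαa

theorem coe_affine_apply (x : I) : (affine α a x : ℝ) = α + a * x := by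
  have hx : a * x ≤ a := mul_le_of_le_one_right ha.le x.2.2
  have hmem : α + a * x ∈ I := ⟨add_nonneg hα (mul_nonneg ha.le x.2.1), by linarith⟩
  exact congrArg Subtype.val (projIcc_of_mem zero_le_one hmem)

theorem IccExtend_comp_affine (f : C(I, ℝ)) {t : ℝ} (ht : t ∈ I) :
    (f.comp (affine α a)).IccExtend zero_le_one t = f.IccExtend zero_le_one (α + a * t) :=
  calc IccExtend zero_le_one (f.comp (affine α a)) t
      = f (affine α a ⟨t, ht⟩) := IccExtend_of_mem _ _ ht
    _ = IccExtend zero_le_one f (affine α a ⟨t, ht⟩) := (IccExtend_val zero_le_one f _).symm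
    _ = IccExtend zero_le_one f (α + a * t) := by rw [coe_affine_apply hα ha hαa]

theorem primitive_comp_affine {ν : Measure ℝ} [IsLocallyFiniteMeasure ν] [NullSingletonClass ν]
    {c : NNReal} (hν : ∀ x ∈ I, ν (Ioc 0 x) = c * ν (Ioc α (α + a * x))) (f : C(I, ℝ)) (x : I) :
    primitive ν (f.comp (affine α a)) x =
      c * (primitive ν f (affine α a x) - primitive ν f (affine α a 0)) := by
  set τ := fun t : ℝ => α + a * t
  set F := f.IccExtend zero_le_one
  have hτ : MeasurableEmbedding τ :=
    ((Homeomorph.mulLeft₀ a ha.ne').trans (Homeomorph.addLeft α)).measurableEmbedding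
  have hcoe := coe_affine_apply hα ha hαa
  have hle : a * x ≤ a := mul_le_of_le_one_right ha.le x.2.2
  have hnonneg : 0 ≤ a * (x : ℝ) := mul_nonneg ha.le x.2.1
  have hpre : τ ⁻¹' Ioc α (α + a * x) = Ioc 0 (x : ℝ) := by
    ext t
    simp [τ, ha]
  calc primitive ν (f.comp (affine α a)) x
      = ∫ t in Ioc 0 (x : ℝ), F (τ t) ∂ν := by
        rw [primitive_apply, intervalIntegral.integral_of_le x.2.1]
        exact setIntegral_congr_fun measurableSet_Ioc fun t ht =>
          IccExtend_comp_affine hα ha hαa f ⟨ht.1.le, ht.2.trans x.2.2⟩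
    _ = ∫ t in Ioc α (α + a * x), F t ∂(ν.restrict (Ioc 0 1)).map τ := by
        rw [hτ.setIntegral_map, hpre, Measure.restrict_restrict measurableSet_Ioc,
          inter_eq_left.2 (Ioc_subset_Ioc_right x.2.2)]
    _ = c * ∫ t in Ioc α (α + a * x), F t ∂ν := by
        rw [map_affine_restrict_Ioc ha hν, Measure.restrict_smul,
          Measure.restrict_restrict measurableSet_Ioc,
          inter_eq_left.2 (Ioc_subset_Ioc_right (add_le_add_right hle α)),
          integral_smul_nnreal_measure, NNReal.smul_def, smul_eq_mul]
    _ = c * (primitive ν f (affine α a x) - primitive ν f (affine α a 0)) := by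
        rw [primitive_sub_primitive, hcoe, hcoe, Icc.coe_zero, mul_zero, add_zero,
          intervalIntegral.integral_of_le (le_add_of_nonneg_right hnonneg)]

theorem primitive_volume_comp_affine (f : C(I, ℝ)) (x : I) :
    a * primitive volume (f.comp (affine α a)) x =
      primitive volume f (affine α a x) - primitive volume f (affine α a 0) := by
  have hvol : ∀ x ∈ I, volume (Ioc 0 x) = a⁻¹.toNNReal * volume (Ioc α (α + a * x)) := by
    intro x _
    rw [Real.volume_Ioc, Real.volume_Ioc, ← ENNReal.ofReal, ← ENNReal.ofReal_mul (by positivity),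
      add_sub_cancel_left, inv_mul_cancel_left₀ ha.ne', sub_zero]
  rw [primitive_comp_affine hα ha hαa hvol, Real.coe_toNNReal _ (inv_nonneg.2 ha.le),
    mul_inv_cancel_left₀ ha.ne']

variable {μ : Measure ℝ} [IsLocallyFiniteMeasure μ] [NullSingletonClass μ] {l : ℝ} {y g : C(I, ℝ)}

theorem IsSolution.comp_affine {c : NNReal}
    (hμ : ∀ x ∈ I, μ (Ioc 0 x) = c * μ (Ioc α (α + a * x)))
    (h : IsSolution μ (c / a * l) y g) :
    IsSolution μ l (y.comp (affine α a)) (a • g.comp (affine α a)) := by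
  constructor <;> ext x
  · have hy := h.apply_sub_apply (affine α a 0) (affine α a x)
    rw [← primitive_volume_comp_affine hα ha hαa g x] at hy
    simpa [map_smul] using eq_add_of_sub_eq' hy
  · have hg := h.deriv_apply_sub_apply (affine α a 0) (affine α a x)
    simp only [ContinuousMap.sub_apply, ContinuousMap.smul_apply, ContinuousMap.one_apply,
      ContinuousMap.comp_apply, smul_eq_mul, primitive_comp_affine hα ha hαa hμ]
    rw [eq_add_of_sub_eq' hg]
    field_simp
    ring

end SelfSimilarity

section Gap

variable {μ : Measure ℝ} [IsLocallyFiniteMeasure μ] [NullSingletonClass μ] {l : ℝ} {y g : C(I, ℝ)}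

theorem IsSolution.deriv_eq_of_measure_eq_zero (h : IsSolution μ l y g) {p q : I} (hpq : p ≤ q)
    (hμ : μ (Ioc (p : ℝ) q) = 0) : g q = g p := by
  have hy : primitive μ y q - primitive μ y p = 0 := by
    rw [primitive_sub_primitive, intervalIntegral.integral_of_le hpq, Measure.restrict_eq_zero.2 hμ,
      integral_zero_measure]
  rw [← sub_eq_zero, h.deriv_apply_sub_apply p q, hy, mul_zero]

theorem IsSolution.eq_add_mul_of_measure_eq_zero (h : IsSolution μ l y g) {p q : I} (hpq : p ≤ q)
    (hμ : μ (Ioc (p : ℝ) q) = 0) : y q = y p + (q - p) * g p := by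
  have hg : primitive volume g q - primitive volume g p = (q - p) * g p := by
    rw [primitive_sub_primitive, ← smul_eq_mul, ← intervalIntegral.integral_const]
    refine intervalIntegral.integral_congr fun t ht => ?_
    rw [uIcc_of_le (Subtype.coe_le_coe.2 hpq)] at ht
    have htI : t ∈ I := ⟨p.2.1.trans ht.1, ht.2.trans q.2.2⟩
    refine (IccExtend_of_mem _ _ htI).trans ?_
    exact h.deriv_eq_of_measure_eq_zero (q := ⟨t, htI⟩) ht.1
      (measure_mono_null (Ioc_subset_Ioc_right ht.2) hμ)
  rw [← hg, ← h.apply_sub_apply p q, add_sub_cancel]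

end Gap

section CantorMeasure

/-- `μ` is self-similar on `[0, 1]`: the `κ` cells `[k(a+b), k(a+b)+a]` carry copies of `μ` with
mass scaled by `1/κ`, and the gaps of length `b` between consecutive cells carry no mass. -/
structure IsCantorMeasure (κ : ℕ) (a b : ℝ) (μ : Measure ℝ) : Prop where
  a_pos : 0 < a
  b_nonneg : 0 ≤ b
  length_eq_one : κ * a + (κ - 1) * b = 1
  measure_cell : ∀ k < κ, ∀ x ∈ I, μ (Ioc 0 x) = κ * μ (Ioc (k * (a + b)) (k * (a + b) + a * x))
  measure_gap : ∀ k, k + 1 < κ → μ (Ioc (k * (a + b) + a) ((k + 1) * (a + b))) = 0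

/-- The similarity of `[0, 1]` onto its `k`-th cell `[k(a+b), k(a+b)+a]`, counted from `0`. -/
noncomputable def cell (a b : ℝ) (k : ℕ) : C(I, I) :=
  affine (k * (a + b)) a

namespace IsCantorMeasure

variable {κ : ℕ} {a b : ℝ} {μ : Measure ℝ} (h : IsCantorMeasure κ a b μ)
include h

theorem kappa_pos : 0 < κ := by
  refine Nat.pos_of_ne_zero fun hκ => ?_
  have hlength := h.length_eq_one
  have hb := h.b_nonneg
  rw [hκ, Nat.cast_zero] at hlength
  linarith

theorem cell_left_nonneg (k : ℕ) : 0 ≤ k * (a + b) :=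
  mul_nonneg k.cast_nonneg (add_nonneg h.a_pos.le h.b_nonneg)

theorem last_cell_right : ((κ - 1 : ℕ) : ℝ) * (a + b) + a = 1 := by
  rw [Nat.cast_pred h.kappa_pos]
  linear_combination h.length_eq_one

theorem cell_right_le_one {k : ℕ} (hk : k < κ) : k * (a + b) + a ≤ 1 := by
  rw [← h.last_cell_right]
  have := add_nonneg h.a_pos.le h.b_nonneg
  gcongr
  omega

theorem coe_cell_apply {k : ℕ} (hk : k < κ) (x : I) : (cell a b k x : ℝ) = k * (a + b) + a * x :=
  coe_affine_apply (h.cell_left_nonneg k) h.a_pos (h.cell_right_le_one hk) x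

theorem cell_zero_zero : cell a b 0 0 = 0 :=
  Subtype.ext (by simp [h.coe_cell_apply h.kappa_pos])

theorem cell_last_one : cell a b (κ - 1) 1 = 1 :=
  Subtype.ext (by simp [h.coe_cell_apply (Nat.sub_lt h.kappa_pos one_pos), h.last_cell_right])

variable [IsLocallyFiniteMeasure μ] [NullSingletonClass μ]

section Solution

variable {l : ℝ} {y g : C(I, ℝ)} (hy : IsSolution μ (κ / a * l) y g) {k : ℕ}
include hy

theorem cauchyData_cell_one (hk : k < κ) :
    ![y (cell a b k 1), a * g (cell a b k 1)] =
      transfer μ l *ᵥ ![y (cell a b k 0), a * g (cell a b k 0)] := by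
  have hscale : ∀ x ∈ I, μ (Ioc 0 x) =
      (κ : NNReal) * μ (Ioc (k * (a + b)) (k * (a + b) + a * x)) := by
    simpa using h.measure_cell k hk
  have hsol := IsSolution.comp_affine (c := κ) (l := l) (h.cell_left_nonneg k) h.a_pos
    (h.cell_right_le_one hk) hscale (by simpa using hy)
  exact hsol.transfer_mulVec.symm

theorem cauchyData_cell_succ_zero (hk : k + 1 < κ) :
    ![y (cell a b (k + 1) 0), a * g (cell a b (k + 1) 0)] =
      shear (b / a) *ᵥ ![y (cell a b k 1), a * g (cell a b k 1)] := by
  have hp : (cell a b k 1 : ℝ) = k * (a + b) + a := by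
    simp [h.coe_cell_apply (Nat.lt_of_succ_lt hk)]
  have hq : (cell a b (k + 1) 0 : ℝ) = (k + 1) * (a + b) := by simp [h.coe_cell_apply hk]
  have hpq : cell a b k 1 ≤ cell a b (k + 1) 0 := by
    rw [← Subtype.coe_le_coe, hp, hq]
    linarith [h.b_nonneg]
  have hgap : μ (Ioc (cell a b k 1 : ℝ) (cell a b (k + 1) 0)) = 0 := by
    rw [hp, hq]
    exact h.measure_gap k hk
  have ha := h.a_pos.ne'
  rw [hy.eq_add_mul_of_measure_eq_zero hpq hgap, hy.deriv_eq_of_measure_eq_zero hpq hgap, hp, hq]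
  ext i
  fin_cases i
  · have hgap_length : (k + 1) * (a + b) - (k * (a + b) + a) = b := by ring
    simp [shear, mulVec, dotProduct, Fin.sum_univ_two, hgap_length, ← mul_assoc,
      div_mul_cancel₀ b ha]
  · simp [shear, mulVec, dotProduct, Fin.sum_univ_two]

theorem cauchyData_cell_zero (hk : k < κ) :
    ![y (cell a b k 0), a * g (cell a b k 0)] =
      (shear (b / a) * transfer μ l) ^ k *ᵥ ![y 0, a * g 0] := by
  induction k with
  | zero => rw [h.cell_zero_zero, pow_zero, one_mulVec]
  | succ k ih =>
    rw [h.cauchyData_cell_succ_zero hy hk, h.cauchyData_cell_one hy (Nat.lt_of_succ_lt hk),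
      ih (Nat.lt_of_succ_lt hk), mulVec_mulVec, mulVec_mulVec, ← pow_succ']

-- A fictitious gap after the last cell turns the transfer across `[0, 1]` into a full power.
theorem shear_mulVec_cauchyData_one :
    shear (b / a) *ᵥ ![y 1, a * g 1] =
      (shear (b / a) * transfer μ l) ^ κ *ᵥ ![y 0, a * g 0] := by
  have hlast : κ - 1 < κ := Nat.sub_lt h.kappa_pos one_pos
  rw [← h.cell_last_one, h.cauchyData_cell_one hy hlast, h.cauchyData_cell_zero hy hlast,
    mulVec_mulVec, mulVec_mulVec, ← pow_succ', Nat.sub_add_cancel h.kappa_pos]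

end Solution

theorem mul_transfer_one_zero (l : ℝ) :
    a * transfer μ (κ / a * l) 1 0 =
      (Chebyshev.U ℝ (κ - 1 : ℕ)).eval ((shear (b / a) * transfer μ l).trace / 2) *
        transfer μ l 1 0 := by
  have hend := congrFun (h.shear_mulVec_cauchyData_one
    (isSolution_fundamentalSolution μ (κ / a * l) 0)) 1
  have hpow := pow_eq_chebyshevU_smul_sub (det_shear_mul_transfer (μ := μ) (b / a) l)
    (mul_div_cancel₀ _ two_ne_zero).symm κ
  rw [shear_mulVec_one_apply, hpow, ← Nat.cast_pred h.kappa_pos] at hend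
  simpa [shear_mul_one_apply, mulVec, dotProduct, Fin.sum_univ_two, transfer_one_apply] using hend

theorem ncard_zeros_Ioo (hμ : μ (Ioc 0 1) ≠ 0) {p q : ℝ} (hpq : p < q) (hp : transfer μ p 1 0 = 0)
    (hq : transfer μ q 1 0 = 0) (hne : ∀ x ∈ Ioo p q, transfer μ x 1 0 ≠ 0) :
    ({x | transfer μ x 1 0 = 0} ∩ Ioo (κ / a * p) (κ / a * q)).ncard = κ - 1 :=
  ncard_zeros_Ioo_of_chebyshevU_mul h.a_pos.ne' (div_pos (Nat.cast_pos.2 h.kappa_pos) h.a_pos)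
    h.mul_transfer_one_zero hne (bijOn_discriminant_of_consecutive_zeros hμ (b / a) hpq hp hq hne)

theorem enumeration_mul_eq (hμ : μ (Ioc 0 1) ≠ 0) {lam : ℕ → ℝ} (hmono : StrictMono lam)
    (hrange : range lam = {l | transfer μ l 1 0 = 0}) (n : ℕ) :
    lam (κ * n) = κ / a * lam n := by
  have hzero (n) : transfer μ (lam n) 1 0 = 0 := hrange.subset (mem_range_self n)
  have hlam0 : lam 0 = 0 := by
    obtain ⟨m, hm⟩ := hrange.superset (transfer_zero_one_zero μ)
    exact le_antisymm (hm ▸ hmono.monotone m.zero_le)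
      (nonneg_of_transfer_one_zero_eq_zero hμ (hzero 0))
  have hscale : 0 < κ / a := div_pos (Nat.cast_pos.2 h.kappa_pos) h.a_pos
  refine strictMono_apply_mul_eq (φ := (κ / a * ·)) hmono (strictMono_mul_left_of_pos hscale)
    (by simp [hlam0]) ?_ h.kappa_pos (fun n => ?_) n
  · rw [hrange]
    intro l (hl : transfer μ l 1 0 = 0)
    have hself := h.mul_transfer_one_zero l
    rw [hl, mul_zero] at hself
    exact (mul_eq_zero.1 hself).resolve_left h.a_pos.ne'
  · rw [hrange]
    refine h.ncard_zeros_Ioo hμ (hmono n.lt_succ_self) (hzero n) (hzero _) fun x hx hx0 => ?_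
    obtain ⟨m, rfl⟩ := hrange.superset hx0
    have hnm := hmono.lt_iff_lt.1 hx.1
    have hmn := hmono.lt_iff_lt.1 hx.2
    omega

end IsCantorMeasure

end CantorMeasure

section Stieltjes

variable {μ : Measure ℝ} {P : ℝ → ℝ} (hμ : ∀ x ∈ I, μ (Icc 0 x) = ENNReal.ofReal (P x))
include hμ

theorem isFiniteMeasure_of_measure_Icc (hμc : μ Iᶜ = 0) : IsFiniteMeasure μ := by
  refine ⟨?_⟩
  rw [← measure_add_measure_compl (measurableSet_Icc (a := (0 : ℝ)) (b := 1)), hμc, add_zero,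
    hμ 1 ⟨zero_le_one, le_rfl⟩]
  exact ENNReal.ofReal_lt_top

theorem measure_Ioc_eq_ofReal_sub (hP0 : P 0 = 0) (hP : MonotoneOn P I) {x y : ℝ} (hx : x ∈ I)
    (hy : y ∈ I) (hxy : x ≤ y) : μ (Ioc x y) = ENNReal.ofReal (P y - P x) := by
  have hset : Ioc x y = Icc 0 y \ Icc 0 x := by
    ext t
    have := hx.1
    simp only [mem_Ioc, Set.mem_sdiff, mem_Icc]
    grind
  have hPx : 0 ≤ P x := hP0 ▸ hP ⟨le_rfl, zero_le_one⟩ hx hx.1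
  have hfin : μ (Icc 0 x) ≠ ⊤ := by simp [hμ x hx]
  rw [hset, measure_sdiff (Icc_subset_Icc_right hxy) measurableSet_Icc.nullMeasurableSet hfin,
    hμ x hx, hμ y hy, ENNReal.ofReal_sub _ hPx]

theorem nullSingletonClass_of_measure_Icc (hPc : ContinuousOn P I) (hP0 : P 0 = 0)
    (hP : MonotoneOn P I) (hμc : μ Iᶜ = 0) : NullSingletonClass μ := by
  refine ⟨fun x => ?_⟩
  by_cases hx : x ∈ I
  · rcases hx.1.eq_or_lt with rfl | hx0
    · simpa [hP0] using hμ 0 hx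
    have := right_nhdsWithin_Ioo_neBot hx0
    have hIoo : Ioo 0 x ⊆ I := fun t ht => ⟨ht.1.le, ht.2.le.trans hx.2⟩
    have hlim : Tendsto (fun t => ENNReal.ofReal (P x - P t)) (𝓝[Ioo 0 x] x) (𝓝 0) := by
      simpa using
        ENNReal.tendsto_ofReal ((tendsto_const_nhds (x := P x)).sub ((hPc x hx).mono hIoo))
    refine nonpos_iff_eq_zero.1 (ge_of_tendsto hlim ?_)
    filter_upwards [self_mem_nhdsWithin] with t ht
    rw [← measure_Ioc_eq_ofReal_sub hμ hP0 hP (hIoo ht) hx ht.2.le]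
    exact measure_mono (singleton_subset_iff.2 ⟨ht.2, le_rfl⟩)
  · exact measure_mono_null (singleton_subset_iff.2 hx) hμc

theorem isCantorMeasure_of_cantorType {κ : ℕ} {a b : ℝ} (ha : 0 < a) (hb : 0 < b)
    (hlength : κ * a + (κ - 1) * b = 1) (hP : CantorType κ a b P) (hPmono : MonotoneOn P I) :
    IsCantorMeasure κ a b μ := by
  obtain ⟨hPc, hP0, -, hgap, hcell⟩ := hP
  have hIoc {x y : ℝ} := measure_Ioc_eq_ofReal_sub hμ hP0 hPmono (x := x) (y := y)
  have hleft (k : ℕ) : 0 ≤ k * (a + b) := by positivity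
  have hright {k : ℕ} (hk : k < κ) : k * (a + b) + a ≤ 1 := by
    have hk' : (k : ℝ) ≤ κ - 1 := by
      rw [le_sub_iff_add_le]
      exact_mod_cast hk
    nlinarith
  refine ⟨ha, hb.le, hlength, fun k hk x hx => ?_, fun k hk => ?_⟩
  · obtain ⟨c, hc⟩ := hcell k (by omega)
    have hax : 0 ≤ a * x := mul_nonneg ha.le hx.1
    have hle : a * x ≤ a := mul_le_of_le_one_right ha.le hx.2
    have hx1 := hright hk
    have hc0 := hc 0 ⟨le_rfl, zero_le_one⟩
    rw [mul_zero, add_zero] at hc0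
    rw [hIoc ⟨le_rfl, zero_le_one⟩ hx hx.1, hIoc ⟨hleft k, by linarith⟩
      ⟨add_nonneg (hleft k) hax, by linarith⟩ (by linarith), ← ENNReal.ofReal_natCast,
      ← ENNReal.ofReal_mul κ.cast_nonneg, mul_sub, hc x hx, hc0]
    congr 1
    ring
  · obtain ⟨c, hc⟩ := hgap (k + 1) (by omega) (by omega)
    rw [Nat.cast_add_one, add_sub_cancel_right] at hc
    have hpq : (k : ℝ) * (a + b) + a < (k + 1) * (a + b) := by linarith
    have hp : (k : ℝ) * (a + b) + a ∈ I := ⟨by linarith [hleft k], hright (by omega)⟩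
    have hq : ((k : ℝ) + 1) * (a + b) ∈ I := by
      have := hright hk
      push_cast at this
      exact ⟨by positivity, by linarith⟩
    have hconst : EqOn P (fun _ => c) (Icc (k * (a + b) + a) ((k + 1) * (a + b))) :=
      EqOn.of_subset_closure hc (hPc.mono (Icc_subset_Icc hp.1 hq.2)) continuousOn_const
        Ioo_subset_Icc_self (closure_Ioo hpq.ne).superset
    rw [hIoc hp hq hpq.le, hconst (right_mem_Icc.2 hpq.le), hconst (left_mem_Icc.2 hpq.le),
      sub_self, ENNReal.ofReal_zero]

end Stieltjes

end KreinString

theorem neumann_spectral_periodicity (κ : ℕ) (a b : ℝ) (hκ : 2 ≤ κ)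
    (ha : 0 < a) (ha' : a < 1 / κ) (hb : b = (1 - κ * a) / (κ - 1))
    (P : ℝ → ℝ) (hP : CantorType κ a b P) (hPmono : MonotoneOn P (Set.Icc 0 1))
    (μ : Measure ℝ)
    (hμ : ∀ x ∈ Set.Icc (0 : ℝ) 1, μ (Set.Icc 0 x) = ENNReal.ofReal (P x))
    (hμc : μ (Set.Icc (0 : ℝ) 1)ᶜ = 0)
    (lam : ℕ → ℝ) (hmono : StrictMono lam)
    (hrange : Set.range lam = {l : ℝ | IsEigen μ 0 0 l}) :
    ∀ n : ℕ, lam (κ * n) = (κ / a) * lam n := by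
  have hκ1 : (0 : ℝ) < κ - 1 := sub_pos.2 (Nat.one_lt_cast.2 hκ)
  have hb_pos : 0 < b := by
    rw [lt_div_iff₀ (by linarith)] at ha'
    rw [hb]
    exact div_pos (by linarith) hκ1
  have hlength : κ * a + (κ - 1) * b = 1 := by
    rw [hb, mul_div_cancel₀ _ hκ1.ne', add_sub_cancel]
  have := KreinString.isFiniteMeasure_of_measure_Icc hμ hμc
  have := KreinString.nullSingletonClass_of_measure_Icc hμ hP.1 hP.2.1 hPmono hμc
  have hmass : μ (Set.Ioc 0 1) ≠ 0 := by
    simp [KreinString.measure_Ioc_eq_ofReal_sub hμ hP.2.1 hPmono, hP.2.1, hP.2.2.1]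
  have hcantor := KreinString.isCantorMeasure_of_cantorType hμ ha hb_pos hlength hP hPmono
  simp only [KreinString.isEigen_iff_transfer] at hrange
  exact hcantor.enumeration_mul_eq hmass hmono hrange
end
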